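/- arXiv:1512.04700 — 6 statements merged into one kernel-verified Lean document; each statement's English description precedes it below -/
import Mathlib

section
/- Let A be an abelian category whose derived category D(A) has Hom sets, let M be an object of A and n a natural number. Then Ext^k_A(M, N) = 0 for all integers k > n and all objects N of A if and only if the functor Hom_{D(A)}(M[0], ?) vanishes on the full subcategory D^{<-n}(A) of complexes X with H^j(X) = 0 for all j ≥ -n. -/
open CategoryTheory CategoryTheory.Limits

universe w v u


lemma exists_stupidTruncLE {A : Type u} [Category.{v} A] [Abelian A]
    (P : CochainComplex A ℤ) (m : ℤ) :
    ∃ (Y : CochainComplex A ℤ) (p : P ⟶ Y), Y.IsStrictlyLE m ∧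
      ∀ i, i ≤ m → IsIso (p.f i) := by
  let e := ComplexShape.embeddingUpIntLE m
  have hφ : e.HasLift (𝟙 (P.restriction e)) := by
    intro j hj i' hi'
    obtain ⟨k, hk⟩ := e.mem_prev hi'
    exact (hj.notMem hi' k hk).elim
  refine ⟨(P.restriction e).extend e, e.liftExtend (𝟙 _) hφ, ?_, ?_⟩
  · infer_instance
  · intro i hi
    have hi' : e.f (m - i).toNat = i := by
      change m - ((m - i).toNat : ℤ) = i
      lia
    rw [e.isIso_liftExtend_f_iff _ hφ hi']
    exact inferInstanceAs (IsIso (𝟙 _))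

lemma fac_of_isStrictlyLE {A : Type u} [Category.{v} A] [Abelian A]
    {P Y X : CochainComplex A ℤ} (m : ℤ) (p : P ⟶ Y) (hp : ∀ i, i ≤ m → IsIso (p.f i))
    [X.IsStrictlyLE m] (g : P ⟶ X) : ∃ φ : Y ⟶ X, g = p ≫ φ := by
  classical
  refine ⟨{ f := fun i => if h : i ≤ m then (haveI := hp i h; inv (p.f i)) ≫ g.f i else 0
            comm' := ?_ }, ?_⟩
  · intro i j hij
    have hij' : i + 1 = j := hij
    by_cases hj : j ≤ m
    · have hi : i ≤ m := by lia
      have := hp i hi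
      have := hp j hj
      simp only [hi, hj, dif_pos]
      rw [← cancel_epi (p.f i)]
      simp
    · exact (X.isZero_of_isStrictlyLE m j (by lia)).eq_of_tgt _ _
  · ext i
    by_cases hi : i ≤ m
    · have := hp i hi
      simp [hi]
    · exact (X.isZero_of_isStrictlyLE m i (by lia)).eq_of_tgt _ _

lemma isGE_of_stupidTrunc {A : Type u} [Category.{v} A] [Abelian A]
    {P Y : CochainComplex A ℤ} (m : ℤ) (p : P ⟶ Y) (hp : ∀ i, i ≤ m → IsIso (p.f i))
    [P.IsGE m] : Y.IsGE m := by
  rw [CochainComplex.isGE_iff]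
  intro i hi
  have h1 := P.exactAt_of_isGE m i hi
  rw [← quasiIsoAt_iff_exactAt p i h1,
    quasiIsoAt_iff' p (i - 1) i (i + 1) (by simp) (by simp)]
  have a1 := hp (i - 1) (by lia)
  have a2 := hp i (by lia)
  have a3 := hp (i + 1) (by lia)
  let ψ := (HomologicalComplex.shortComplexFunctor' A (ComplexShape.up ℤ)
    (i - 1) i (i + 1)).map p
  have : IsIso ψ.τ₁ := a1
  have : IsIso ψ.τ₂ := a2
  have : IsIso ψ.τ₃ := a3
  exact ShortComplex.quasiIso_of_epi_of_isIso_of_mono ψ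

/-- Let `A` be an abelian category whose derived category has Hom sets, `M` an object of `A`
and `n` a natural number.  Then `Ext^k_A(M, N) = 0` for all integers `k > n` and all `N`
(expressed via morphisms `M[0] ⟶ N[0]⟦k⟧` in the derived category) if and only if
`Hom_{D(A)}(M[0], ?)` vanishes on the full subcategory `D^{< -n}(A)` of complexes whose
cohomology vanishes in all degrees `≥ -n`. -/
theorem stmt3 {A : Type u} [Category.{v} A] [Abelian A] [HasDerivedCategory.{w} A]
    (M : A) (n : ℕ) :
    (∀ (k : ℤ), (n : ℤ) < k → ∀ (N : A),
        ∀ f : (DerivedCategory.singleFunctor A 0).obj M ⟶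
          ((DerivedCategory.singleFunctor A 0).obj N)⟦k⟧, f = 0) ↔
    (∀ (X : DerivedCategory A),
        (∀ (j : ℤ), -(n : ℤ) ≤ j → IsZero ((DerivedCategory.homologyFunctor A j).obj X)) →
        ∀ f : (DerivedCategory.singleFunctor A 0).obj M ⟶ X, f = 0) := by
  constructor
  · intro H X hX f
    have hXLE : X.IsLE (-(n : ℤ) - 1) := by
      rw [DerivedCategory.isLE_iff]
      intro i hi
      exact hX i (by lia)
    obtain ⟨K, _, ⟨eX⟩⟩ := DerivedCategory.exists_iso_Q_obj_of_isLE X (-(n : ℤ) - 1)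
    let eM := (DerivedCategory.singleFunctorIsoCompQ A 0).app M
    suffices h : eM.inv ≫ f ≫ eX.hom = 0 by
      rw [← cancel_mono eX.hom, ← cancel_epi eM.inv, h]
      simp
    generalize eM.inv ≫ f ≫ eX.hom = f'
    obtain ⟨P, _, s, _, g, rfl⟩ := DerivedCategory.right_fac_of_isStrictlyLE
      (X := (CochainComplex.singleFunctor A 0).obj M) f' 0
    have hP0 : P.IsGE 0 := by
      rw [← DerivedCategory.isGE_Q_obj_iff]
      exact DerivedCategory.TStructure.t.isGE_of_iso
        (eM ≪≫ (asIso (DerivedCategory.Q.map s)).symm) 0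
    have hP : P.IsGE (-(n : ℤ) - 1) := P.isGE_of_ge _ 0 (by lia)
    obtain ⟨Y, p, hY, hp⟩ := exists_stupidTruncLE P (-(n : ℤ) - 1)
    have hY' := isGE_of_stupidTrunc _ p hp
    obtain ⟨φ, rfl⟩ := fac_of_isStrictlyLE _ p hp g
    obtain ⟨N, ⟨eN⟩⟩ := DerivedCategory.exists_iso_singleFunctor_obj_of_isGE_of_isLE
      (DerivedCategory.Q.obj Y) (-(n : ℤ) - 1)
    let eN' := eN ≪≫ (((DerivedCategory.singleFunctors A).shiftIso
      ((n : ℤ) + 1) (-(n : ℤ) - 1) 0 (by lia)).symm).app N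
    have h0 := H ((n : ℤ) + 1) (by lia) N
      (eM.hom ≫ inv (DerivedCategory.Q.map s) ≫ DerivedCategory.Q.map p ≫ eN'.hom)
    have h1 : inv (DerivedCategory.Q.map s) ≫ DerivedCategory.Q.map p = 0 := by
      rw [← cancel_mono eN'.hom, ← cancel_epi eM.hom, Category.assoc, h0]
      simp
    rw [Functor.map_comp, ← Category.assoc, h1, zero_comp]
  · intro H k hk N f
    refine H _ (fun j hj => ?_) f
    have : (((DerivedCategory.singleFunctor A 0).obj N)⟦k⟧).IsLE (-k) :=
      DerivedCategory.TStructure.t.isLE_shift _ 0 k (-k) (by lia)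
    exact DerivedCategory.isZero_of_isLE _ (-k) j (by lia)
end

section
/- Let A be an abelian category whose derived category D(A) has Hom sets and arbitrary set-indexed coproducts. Let (X_i)_{i∈I} be a family of objects of D^{≤0}(A) with coproduct ∐ X_i in D(A) and injections ι_j : X_j → ∐ X_i. Then H^0(∐ X_i), together with the morphisms H^0(ι_j) : H^0(X_j) → H^0(∐ X_i), is a coproduct of the objects H^0(X_i) in A. In particular, A has all set-indexed coproducts (is AB3). -/
open CategoryTheory CategoryTheory.Limits

universe w v u

section helpers
open DerivedCategory DerivedCategory.TStructure Triangulated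

variable {A : Type u} [Category.{v} A] [Abelian A] [HasDerivedCategory.{w} A]

lemma aux_refl (X : DerivedCategory A) [X.IsLE 0] :
    ∃ (N : A) (p : X ⟶ (singleFunctor A 0).obj N), IsIso ((homologyFunctor A 0).map p) ∧
      ∀ (M : A) (f : X ⟶ (singleFunctor A 0).obj M), ∃ g : N ⟶ M,
        f = p ≫ (singleFunctor A 0).map g := by
  have hY : ((t.truncGE 0).obj X).IsLE 0 := inferInstance
  have hY' : ((t.truncGE 0).obj X).IsGE 0 := inferInstance
  obtain ⟨N, ⟨e⟩⟩ := exists_iso_singleFunctor_obj_of_isGE_of_isLE ((t.truncGE 0).obj X) 0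
  have hT := (t : TStructure (DerivedCategory A)).triangleLTGE_distinguished 0 X
  have hL : ((t.truncLT 0).obj X).IsLE (-1) := t.isLE_truncLT_obj X 0 (-1)
  have h0 : IsZero ((homologyFunctor A 0).obj ((t.triangleLTGE 0).obj X).obj₁) :=
    isZero_of_isLE ((t.truncLT 0).obj X) (-1) 0 (by lia)
  have h1 : IsZero ((homologyFunctor A 1).obj ((t.triangleLTGE 0).obj X).obj₁) :=
    isZero_of_isLE ((t.truncLT 0).obj X) (-1) 1 (by lia)
  have hm := (HomologySequence.mono_homologyMap_mor₂_iff _ hT 0).2 (h0.eq_of_src _ _)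
  have he := (HomologySequence.epi_homologyMap_mor₂_iff _ hT 0 1).2 (h1.eq_of_tgt _ _)
  have hi : IsIso ((homologyFunctor A 0).map ((t.truncGEπ 0).app X)) :=
    @isIso_of_mono_of_epi _ _ _ _ _ _ hm he
  refine ⟨N, (t.truncGEπ 0).app X ≫ e.hom, ?_, fun M f => ?_⟩
  · rw [Functor.map_comp]
    exact IsIso.comp_isIso' hi inferInstance
  · obtain ⟨g, hg⟩ := (singleFunctor A 0).map_surjective (e.inv ≫ t.descTruncGE f 0)
    exact ⟨g, by rw [hg]; simp⟩

lemma aux_inj (X : DerivedCategory A) [X.IsLE 0] (M : A)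
    (f f' : X ⟶ (singleFunctor A 0).obj M)
    (h : (homologyFunctor A 0).map f = (homologyFunctor A 0).map f') : f = f' := by
  obtain ⟨N, p, hp, H⟩ := aux_refl X
  obtain ⟨g, rfl⟩ := H M f
  obtain ⟨g', rfl⟩ := H M f'
  rw [Functor.map_comp, Functor.map_comp, cancel_epi] at h
  have : g = g' := by
    have e1 := NatIso.naturality_1 (singleFunctorCompHomologyFunctorIso A 0) g
    have e2 := NatIso.naturality_1 (singleFunctorCompHomologyFunctorIso A 0) g'
    dsimp at e1 e2
    rw [← e1, ← e2, h]
  rw [this]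

lemma aux_surj (X : DerivedCategory A) [X.IsLE 0] (M : A)
    (h : (homologyFunctor A 0).obj X ⟶ M) :
    ∃ f : X ⟶ (singleFunctor A 0).obj M,
      (homologyFunctor A 0).map f ≫ (singleFunctorCompHomologyFunctorIso A 0).hom.app M = h := by
  obtain ⟨N, p, hp, -⟩ := aux_refl X
  let g : N ⟶ M := (singleFunctorCompHomologyFunctorIso A 0).inv.app N ≫
    inv ((homologyFunctor A 0).map p) ≫ h
  refine ⟨p ≫ (singleFunctor A 0).map g, ?_⟩
  have := (singleFunctorCompHomologyFunctorIso A 0).hom.naturality g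
  dsimp at this
  rw [Functor.map_comp, Category.assoc, this]
  simp [g]

lemma aux_isLE [HasCoproducts.{v} (DerivedCategory A)] {I : Type v} (X : I → DerivedCategory A)
    (hX : ∀ i, (X i).IsLE 0) : (∐ X).IsLE 0 := by
  refine (t.isLE_iff_orthogonal 0 1 (by lia) _).2 fun Y f hY => ?_
  refine Sigma.hom_ext _ _ fun i => ?_
  have := hX i
  exact (t.zero _ 0 1).trans comp_zero.symm

lemma aux_existsUnique [HasCoproducts.{v} (DerivedCategory A)] {I : Type v}
    (X : I → DerivedCategory A) (hX : ∀ i, (X i).IsLE 0) (M : A)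
    (s : ∀ i, (homologyFunctor A 0).obj (X i) ⟶ M) :
    ∃! d : (homologyFunctor A 0).obj (∐ X) ⟶ M,
      ∀ i, (homologyFunctor A 0).map (Sigma.ι X i) ≫ d = s i := by
  have := aux_isLE X hX
  choose f hf using fun i => aux_surj (X i) M (s i)
  refine ⟨(homologyFunctor A 0).map (Sigma.desc f) ≫
    (singleFunctorCompHomologyFunctorIso A 0).hom.app M, fun i => ?_, fun d hd => ?_⟩
  · rw [← Functor.map_comp_assoc, Sigma.ι_desc, hf]
  · obtain ⟨k, rfl⟩ := aux_surj (∐ X) M d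
    congr 2
    refine Sigma.hom_ext _ _ fun i => ?_
    rw [Sigma.ι_desc]
    have := hX i
    apply aux_inj
    rw [← cancel_mono ((singleFunctorCompHomologyFunctorIso A 0).hom.app M), hf, ← hd i,
      Functor.map_comp, Category.assoc]

end helpers




/-- Let `A` be an abelian category whose derived category has Hom sets and all set-indexed
coproducts.  For every family `(Xᵢ)` of objects of `D^{≤0}(A)`, the object `H^0(∐ Xᵢ)` together
with the morphisms `H^0(ιⱼ)` is a coproduct of the `H^0(Xᵢ)` in `A`; in particular `A` has all
set-indexed coproducts (it is AB3). -/
theorem stmt4 {A : Type u} [Category.{v} A] [Abelian A] [HasDerivedCategory.{w} A]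
    [HasCoproducts.{v} (DerivedCategory A)] :
    (∀ (I : Type v) (X : I → DerivedCategory A),
      (∀ (i : I) (j : ℤ), 0 < j → IsZero ((DerivedCategory.homologyFunctor A j).obj (X i))) →
      Nonempty (IsColimit (Cofan.mk ((DerivedCategory.homologyFunctor A 0).obj (∐ X))
        (fun i => (DerivedCategory.homologyFunctor A 0).map (Sigma.ι X i))))) ∧
    HasCoproducts.{v} A := by

  refine ⟨fun I X hX => ?_, ?_⟩
  · have hX' : ∀ i, (X i).IsLE 0 := fun i => (DerivedCategory.isLE_iff _ _).2 (hX i)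
    choose d hd hd' using fun (c : Cofan fun i => (DerivedCategory.homologyFunctor A 0).obj (X i)) =>
      aux_existsUnique X hX' c.pt c.inj
    exact ⟨Cofan.IsColimit.mk _ d hd hd'⟩
  · have hX' : ∀ {J : Type v} (f : J → A) (i : J),
        ((DerivedCategory.singleFunctor A 0).obj (f i)).IsLE 0 := fun f i => inferInstance
    refine hasCoproducts_of_colimit_cofans
      (fun {J} f => Cofan.mk ((DerivedCategory.homologyFunctor A 0).obj
        (∐ fun j => (DerivedCategory.singleFunctor A 0).obj (f j)))
        (fun j => (DerivedCategory.singleFunctorCompHomologyFunctorIso A 0).inv.app (f j) ≫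
          (DerivedCategory.homologyFunctor A 0).map (Sigma.ι (fun j => (DerivedCategory.singleFunctor A 0).obj (f j)) j))) (fun {J} f => ?_)
    choose d hd hd' using fun (c : Cofan f) => aux_existsUnique _ (hX' f) c.pt
      (fun j => (DerivedCategory.singleFunctorCompHomologyFunctorIso A 0).hom.app (f j) ≫ c.inj j)
    refine Cofan.IsColimit.mk _ d (fun c j => ?_) (fun c m hm => hd' c m fun j => ?_)
    · have := hd c j
      dsimp at this ⊢
      rw [Category.assoc, this]
      simp
    · rw [← hm j]
      simp
end

section
/- Let A be an abelian category whose derived category D(A) has Hom sets and coproducts, and let T be an object of A satisfying: (i) the coproduct T^{(I)} of I copies of T is the same in A and in D(A) for all sets I, and (ii) Ext^k_A(T, T^{(I)}) = 0 for all integers k > 0 and all sets I. Then the composite functor F : K^b(Add(T)) → K(A) → D(A) (inclusion followed by the localization functor) is fully faithful; consequently thick_{D(A)}(Sum(T)) consists precisely of the complexes isomorphic in D(A) to bounded complexes of objects of Add(T). -/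
open CategoryTheory CategoryTheory.Limits CategoryTheory.Pretriangulated

universe w v u

variable {A : Type u} [Category.{v} A] [Abelian A] [HasDerivedCategory.{w} A]

/-- A class of objects of a triangulated category is thick: it contains the zero objects, is
closed under isomorphisms, shifts, extensions and direct summands. -/
structure IsThickSet (D : Type*) [Category D] [Limits.HasZeroObject D] [Preadditive D]
    [HasShift D ℤ] [∀ n : ℤ, (CategoryTheory.shiftFunctor D n).Additive] [Pretriangulated D]
    (S : Set D) : Prop where
  zero : ∀ Z : D, Limits.IsZero Z → Z ∈ S
  iso : ∀ ⦃X Y : D⦄, (X ≅ Y) → X ∈ S → Y ∈ S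
  shift : ∀ ⦃X : D⦄, X ∈ S → ∀ n : ℤ, X⟦n⟧ ∈ S
  ext₂ : ∀ (T : Triangle D), T ∈ (distTriang D) → T.obj₁ ∈ S → T.obj₃ ∈ S → T.obj₂ ∈ S
  summand : ∀ ⦃X Y : D⦄, (∃ (s : X ⟶ Y) (r : Y ⟶ X), s ≫ r = 𝟙 X) → Y ∈ S → X ∈ S

variable [HasCoproducts.{v} A] [HasCoproducts.{v} (DerivedCategory A)] (T : A)

/-- `Add(T)`: direct summands of set-indexed coproducts of copies of `T` in `A`. -/
def addT : Set A :=
  {X | ∃ (I : Type v) (s : X ⟶ ∐ (fun _ : I => T)) (r : ∐ (fun _ : I => T) ⟶ X), s ≫ r = 𝟙 X}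

/-- A cochain complex is a bounded complex with entries in `Add(T)`. -/
def isBoundedAddT (X : CochainComplex A ℤ) : Prop :=
  (∀ n : ℤ, X.X n ∈ addT T) ∧ ∃ a b : ℤ, ∀ n : ℤ, (n < a ∨ b < n) → Limits.IsZero (X.X n)

/-- The objects of `D(A)` isomorphic to (the image of) a bounded complex of objects of
`Add(T)`. -/
def boundedAddTSet : Set (DerivedCategory A) :=
  {Z | ∃ X : CochainComplex A ℤ, isBoundedAddT T X ∧ Nonempty (Z ≅ DerivedCategory.Q.obj X)}

/-- `Sum(T)` viewed in `D(A)`: objects isomorphic to `(T^{(I)})[0]` for some set `I`. -/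
def sumTSet : Set (DerivedCategory A) :=
  {Z | ∃ I : Type v,
    Nonempty (Z ≅ (DerivedCategory.singleFunctor A 0).obj (∐ (fun _ : I => T)))}

/-- Bijectivity of `F` on a Hom group. -/
def BijHom {C D : Type*} [Category C] [Category D] (F : C ⥤ D) (X Y : C) : Prop :=
  Function.Bijective (fun f : X ⟶ Y => F.map f)

lemma BijHom.iso {C D : Type*} [Category C] [Category D] {F : C ⥤ D} {X Y X' Y' : C}
    (h : BijHom F X Y) (e : X ≅ X') (e' : Y ≅ Y') : BijHom F X' Y' := by
  constructor
  · intro f g hfg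
    have : e.hom ≫ f ≫ e'.inv = e.hom ≫ g ≫ e'.inv := h.1 (by
      dsimp at hfg ⊢; simp [hfg])
    simpa using this
  · intro f
    obtain ⟨g, hg⟩ := h.2 (F.map e.hom ≫ f ≫ F.map e'.inv)
    refine ⟨e.inv ≫ g ≫ e'.hom, ?_⟩
    dsimp at hg ⊢
    rw [F.map_comp, F.map_comp, hg]
    simp [← F.map_comp, ← F.map_comp_assoc]

/-- Bijectivity in all shifts. -/
def BijAll {C D : Type*} [Category C] [Category D] [HasShift C ℤ] (F : C ⥤ D) (X Y : C) : Prop :=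
  ∀ m n : ℤ, BijHom F (X⟦m⟧) (Y⟦n⟧)

lemma BijAll.iso {C D : Type*} [Category C] [Category D] [HasShift C ℤ] {F : C ⥤ D}
    {X Y X' Y' : C} (h : BijAll F X Y) (e : X ≅ X') (e' : Y ≅ Y') :
    BijAll F X' Y' := fun m n =>
  (h m n).iso ((shiftFunctor C m).mapIso e) ((shiftFunctor C n).mapIso e')

section Gen
variable {C D : Type*} [Category C] [Category D] [HasZeroObject C] [HasZeroObject D]
  [Preadditive C] [Preadditive D] [HasShift C ℤ] [HasShift D ℤ]
  [∀ n : ℤ, (shiftFunctor C n).Additive] [∀ n : ℤ, (shiftFunctor D n).Additive]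
  [Pretriangulated C] [Pretriangulated D] (F : C ⥤ D) [F.CommShift ℤ] [F.IsTriangulated]

lemma bij_left (T : Triangle C) (hT : T ∈ distTriang C) (Y : C)
    (h1 : BijHom F T.obj₁ Y) (h1' : BijHom F (T.obj₁⟦(1 : ℤ)⟧) Y)
    (h3 : BijHom F T.obj₃ Y) (h3' : BijHom F (T.obj₃⟦(-1 : ℤ)⟧) Y) :
    BijHom F T.obj₂ Y := by
  have hF := F.map_distinguished T hT
  have hTr := inv_rot_of_distTriang _ hT
  obtain ⟨w, hw0, hw⟩ : ∃ w : T.obj₃⟦(-1 : ℤ)⟧ ⟶ T.obj₁, w ≫ T.mor₁ = 0 ∧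
      ∀ u : T.obj₁ ⟶ Y, w ≫ u = 0 → ∃ v, u = T.mor₁ ≫ v :=
    ⟨T.invRotate.mor₁, comp_distTriang_mor_zero₁₂ _ hTr,
      fun u hu => T.invRotate.yoneda_exact₂ hTr u hu⟩
  have E2 : ∀ u : F.obj T.obj₂ ⟶ F.obj Y, F.map T.mor₁ ≫ u = 0 → ∃ v, u = F.map T.mor₂ ≫ v :=
    fun u hu => Triangle.yoneda_exact₂ _ hF u hu
  have E3 : ∀ u : F.obj T.obj₃ ⟶ F.obj Y, F.map T.mor₂ ≫ u = 0 →
      ∃ v, u = (F.map T.mor₃ ≫ (F.commShiftIso (1 : ℤ)).hom.app _) ≫ v :=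
    fun u hu => Triangle.yoneda_exact₃ _ hF u hu
  constructor
  · intro f f' hff'
    rw [← sub_eq_zero]
    have hff : F.map (f - f') = 0 := by
      rw [F.map_sub, sub_eq_zero]; exact hff'
    generalize f - f' = f at hff
    obtain ⟨g, hg⟩ := T.yoneda_exact₂ hT f (h1.1 (by simp [hff]))
    obtain ⟨h, hh⟩ := E3 (F.map g) (by rw [← F.map_comp, ← hg, hff])
    obtain ⟨k, hk⟩ := h1'.2 ((F.commShiftIso (1 : ℤ)).hom.app _ ≫ h)
    dsimp only at hk
    have : g = T.mor₃ ≫ k := h3.1 (by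
      dsimp only; rw [hh, F.map_comp, hk, Category.assoc])
    rw [hg, this, ← Category.assoc, comp_distTriang_mor_zero₂₃ _ hT, zero_comp]
  · intro f
    obtain ⟨f1, hf1⟩ := h1.2 (F.map T.mor₁ ≫ f)
    dsimp only at hf1
    obtain ⟨f2, hf2⟩ := hw f1 (h3'.1 (by
      dsimp only
      rw [F.map_comp, hf1, ← F.map_comp_assoc, hw0]; simp))
    obtain ⟨g, hg⟩ := E2 (f - F.map f2) (by
      rw [Preadditive.comp_sub, ← F.map_comp, ← hf2, hf1, sub_self])
    obtain ⟨g', hg'⟩ := h3.2 g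
    dsimp only at hg'
    exact ⟨T.mor₂ ≫ g' + f2, by dsimp only; rw [F.map_add, F.map_comp, hg', ← hg]; abel⟩

lemma bij_right (T : Triangle C) (hT : T ∈ distTriang C) (X : C)
    (h1 : BijHom F X T.obj₁) (h1' : BijHom F X (T.obj₁⟦(1 : ℤ)⟧))
    (h3 : BijHom F X T.obj₃) (h3' : BijHom F X (T.obj₃⟦(-1 : ℤ)⟧)) :
    BijHom F X T.obj₂ := by
  have hF := F.map_distinguished T hT
  have hTr := inv_rot_of_distTriang _ hT
  have hFr := F.map_distinguished _ hTr
  obtain ⟨w, hw0, hw⟩ : ∃ w : T.obj₃⟦(-1 : ℤ)⟧ ⟶ T.obj₁, w ≫ T.mor₁ = 0 ∧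
      ∀ u : F.obj X ⟶ F.obj T.obj₁, u ≫ F.map T.mor₁ = 0 → ∃ v, u = v ≫ F.map w :=
    ⟨T.invRotate.mor₁, comp_distTriang_mor_zero₁₂ _ hTr,
      fun u hu => Triangle.coyoneda_exact₂ _ hFr u hu⟩
  have E2 : ∀ u : F.obj X ⟶ F.obj T.obj₂, u ≫ F.map T.mor₂ = 0 → ∃ v, u = v ≫ F.map T.mor₁ :=
    fun u hu => Triangle.coyoneda_exact₂ _ hF u hu
  constructor
  · intro f f' hff'
    rw [← sub_eq_zero]
    have hff : F.map (f - f') = 0 := by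
      rw [F.map_sub, sub_eq_zero]; exact hff'
    generalize f - f' = f at hff
    obtain ⟨g, hg⟩ := T.coyoneda_exact₂ hT f (h3.1 (by simp [hff]))
    obtain ⟨h, hh⟩ := hw (F.map g) (by
      rw [← F.map_comp, ← hg, hff])
    obtain ⟨k, hk⟩ := h3'.2 h
    dsimp only at hk
    have : g = k ≫ w := h1.1 (by
      dsimp only; rw [hh, F.map_comp, hk])
    rw [hg, this, Category.assoc, hw0, comp_zero]
  · intro f
    obtain ⟨f3, hf3⟩ := h3.2 (f ≫ F.map T.mor₂)
    dsimp only at hf3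
    obtain ⟨f2, hf2⟩ := T.coyoneda_exact₃ hT f3 (h1'.1 (by
      dsimp only
      rw [F.map_comp, hf3, Category.assoc, ← F.map_comp, comp_distTriang_mor_zero₂₃ _ hT]; simp))
    obtain ⟨g, hg⟩ := E2 (f - F.map f2) (by
      rw [Preadditive.sub_comp, ← F.map_comp, ← hf2, hf3, sub_self])
    obtain ⟨g', hg'⟩ := h1.2 g
    dsimp only at hg'
    exact ⟨g' ≫ T.mor₁ + f2, by dsimp only; rw [F.map_add, F.map_comp, hg', ← hg]; abel⟩

lemma BijAll.left (T : Triangle C) (hT : T ∈ distTriang C) (Y : C)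
    (h1 : BijAll F T.obj₁ Y) (h3 : BijAll F T.obj₃ Y) : BijAll F T.obj₂ Y := fun m n => by
  exact bij_left F _ (Triangle.shift_distinguished T hT m) _ (h1 m n)
    ((h1 _ n).iso ((shiftFunctorAdd C m 1).app _) (Iso.refl _)) (h3 m n)
    ((h3 _ n).iso ((shiftFunctorAdd C m (-1)).app _) (Iso.refl _))

lemma BijAll.right (T : Triangle C) (hT : T ∈ distTriang C) (X : C)
    (h1 : BijAll F X T.obj₁) (h3 : BijAll F X T.obj₃) : BijAll F X T.obj₂ := fun m n => by
  exact bij_right F _ (Triangle.shift_distinguished T hT n) _ (h1 m n)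
    ((h1 m _).iso (Iso.refl _) ((shiftFunctorAdd C n 1).app _)) (h3 m n)
    ((h3 m _).iso (Iso.refl _) ((shiftFunctorAdd C n (-1)).app _))

end Gen

section AddT
set_option linter.unusedSectionVars false
open scoped ZeroObject

lemma addT_iso {X Y : A} (e : X ≅ Y) (h : X ∈ addT T) : Y ∈ addT T := by
  obtain ⟨I, s, r, hsr⟩ := h
  exact ⟨I, e.inv ≫ s, r ≫ e.hom, by simp [reassoc_of% hsr]⟩

lemma addT_zero {X : A} (h : IsZero X) : X ∈ addT T :=
  ⟨PEmpty, 0, 0, h.eq_of_src _ _⟩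

lemma addT_biprod {X Y : A} (hX : X ∈ addT T) (hY : Y ∈ addT T) : (X ⊞ Y : A) ∈ addT T := by
  obtain ⟨I, s, r, hsr⟩ := hX
  obtain ⟨J, s', r', hsr'⟩ := hY
  refine ⟨I ⊕ J, biprod.desc (s ≫ Sigma.desc (fun i => Sigma.ι (fun _ : I ⊕ J => T) (Sum.inl i)))
    (s' ≫ Sigma.desc (fun i => Sigma.ι (fun _ : I ⊕ J => T) (Sum.inr i))),
    Sigma.desc (fun k => match k with
      | Sum.inl i => Sigma.ι (fun _ : I => T) i ≫ r ≫ biprod.inl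
      | Sum.inr i => Sigma.ι (fun _ : J => T) i ≫ r' ≫ biprod.inr), ?_⟩
  have h1 : Sigma.desc (fun i => Sigma.ι (fun _ : I ⊕ J => T) (Sum.inl i)) ≫
    Sigma.desc (fun k => match k with
      | Sum.inl i => Sigma.ι (fun _ : I => T) i ≫ r ≫ biprod.inl
      | Sum.inr i => Sigma.ι (fun _ : J => T) i ≫ r' ≫ (biprod.inr : Y ⟶ X ⊞ Y)) = r ≫ biprod.inl := by
    apply Sigma.hom_ext; intro i; simp
  have h2 : Sigma.desc (fun i => Sigma.ι (fun _ : I ⊕ J => T) (Sum.inr i)) ≫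
    Sigma.desc (fun k => match k with
      | Sum.inl i => Sigma.ι (fun _ : I => T) i ≫ r ≫ biprod.inl
      | Sum.inr i => Sigma.ι (fun _ : J => T) i ≫ r' ≫ (biprod.inr : Y ⟶ X ⊞ Y)) = r' ≫ biprod.inr := by
    apply Sigma.hom_ext; intro i; simp
  ext1
  · rw [biprod.inl_desc_assoc, Category.assoc, h1, reassoc_of% hsr, Category.comp_id]
  · rw [biprod.inr_desc_assoc, Category.assoc, h2, reassoc_of% hsr', Category.comp_id]

lemma addT_sum (I : Type v) : (∐ (fun _ : I => T)) ∈ addT T := ⟨I, 𝟙 _, 𝟙 _, by simp⟩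

lemma devissage (P : HomotopyCategory A (ComplexShape.up ℤ) → Prop)
    (hiso : ∀ X Y, (X ≅ Y) → P X → P Y)
    (hsingle : ∀ (n : ℤ) (M : A), M ∈ addT T →
      P ((HomotopyCategory.quotient A (ComplexShape.up ℤ)).obj
        ((HomologicalComplex.single A (ComplexShape.up ℤ) n).obj M)))
    (hext : ∀ Δ ∈ distTriang (HomotopyCategory A (ComplexShape.up ℤ)),
      P Δ.obj₁ → P Δ.obj₃ → P Δ.obj₂) (X : CochainComplex A ℤ) (hX : isBoundedAddT T X) :
    P ((HomotopyCategory.quotient A (ComplexShape.up ℤ)).obj X) := by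
  obtain ⟨hX, a, b, hab⟩ := hX
  obtain ⟨N, hN⟩ : ∃ N : ℕ, b - N < a := ⟨(b - a + 1).toNat, by omega⟩
  have hab' : ∀ n : ℤ, n ≤ b - N ∨ b < n → IsZero (X.X n) := fun n hn => hab n (by omega)
  clear hab hN
  induction N generalizing b X with
  | zero =>
    have hz : IsZero X := by
      rw [IsZero.iff_id_eq_zero]
      ext n
      exact (hab' n (by simp; omega)).eq_of_src _ _
    have h0 := hsingle 0 (0 : A) (addT_zero T (isZero_zero A))
    refine hiso _ _ ((HomotopyCategory.quotient A (ComplexShape.up ℤ)).mapIso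
      (IsZero.iso ?_ hz)) h0
    exact (HomologicalComplex.single A (ComplexShape.up ℤ) 0).map_isZero (isZero_zero A)
  | succ N ih =>
    let f : (HomologicalComplex.single A (ComplexShape.up ℤ) b).obj (X.X b) ⟶ X :=
      HomologicalComplex.mkHomFromSingle (𝟙 _) (fun k hk => by
        simp only [ComplexShape.up_Rel] at hk
        exact (hab' k (by omega)).eq_of_tgt _ _)
    have hfb : IsIso (f.f b) := by
      dsimp only [f]
      rw [HomologicalComplex.mkHomFromSingle_f]
      infer_instance
    have hsz : ∀ n, n ≠ b →
        IsZero (((HomologicalComplex.single A (ComplexShape.up ℤ) b).obj (X.X b)).X n) :=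
      fun n hn => HomologicalComplex.isZero_single_obj_X _ _ _ _ hn
    have hr : ∀ n, ∃ r, f.f n ≫ r = 𝟙 _ := fun n => by
      by_cases hn : n = b
      · subst hn; exact ⟨inv (f.f n), by simp⟩
      · exact ⟨0, (hsz n hn).eq_of_src _ _⟩
    have : ∀ n, Mono (f.f n) := fun n => by
      obtain ⟨r, hr⟩ := hr n
      exact mono_of_mono_fac hr
    let S : ShortComplex (CochainComplex A ℤ) := ShortComplex.mk f (cokernel.π f) (by simp)
    have hS : S.Exact := ShortComplex.exact_cokernel f
    have hSn : ∀ n, (S.map (HomologicalComplex.eval A _ n)).Exact := fun n => hS.map _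
    have hepi : ∀ n, Epi ((cokernel.π f).f n) := fun n =>
      inferInstanceAs (Epi ((HomologicalComplex.eval A _ n).map (cokernel.π f)))
    let σ : ∀ n, (S.map (HomologicalComplex.eval A _ n)).Splitting := fun n =>
      have : Epi (S.map (HomologicalComplex.eval A _ n)).g := hepi n
      ShortComplex.Splitting.ofExactOfRetraction _ (hSn n) (hr n).choose (hr n).choose_spec this
    have hdist : CochainComplex.trianglehOfDegreewiseSplit S σ ∈
        distTriang (HomotopyCategory A (ComplexShape.up ℤ)) :=
      (HomotopyCategory.distinguished_iff_iso_trianglehOfDegreewiseSplit _).2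
        ⟨S, σ, ⟨Iso.refl _⟩⟩
    have h3z : IsZero ((cokernel f).X b) := by
      have h0 : (cokernel.π f).f b = 0 := by
        rw [← cancel_epi (f.f b), comp_zero, ← HomologicalComplex.comp_f, cokernel.condition,
          HomologicalComplex.zero_f]
      exact IsZero.of_epi_eq_zero _ h0
    have h3i : ∀ n, n ≠ b → IsIso ((cokernel.π f).f n) := fun n hn => by
      have : Mono ((cokernel.π f).f n) := (hSn n).mono_g ((hsz n hn).eq_of_src _ _)
      exact isIso_of_mono_of_epi _
    refine hext _ hdist (hsingle b _ (hX b)) (ih (cokernel f) ?_ (b - 1) ?_)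
    · intro n
      by_cases hn : n = b
      · subst hn; exact addT_zero T h3z
      · have := h3i n hn
        exact addT_iso T (asIso ((cokernel.π f).f n)) (hX n)
    · intro n hn
      by_cases hn' : n = b
      · subst hn'; exact h3z
      · have := h3i n hn'
        exact (hab' n (by push_cast; omega)).of_iso (asIso ((cokernel.π f).f n)).symm

end AddT

section FF
set_option linter.unusedSectionVars false

lemma ext_vanish (hsame : ∀ I : Type v, IsIso (Sigma.desc
      (fun i : I => (DerivedCategory.singleFunctor A 0).map
        (Sigma.ι (fun _ : I => T) i))))
    (hext : ∀ (k : ℤ), 0 < k → ∀ I : Type v,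
      ∀ f : (DerivedCategory.singleFunctor A 0).obj T ⟶
        ((DerivedCategory.singleFunctor A 0).obj (∐ (fun _ : I => T)))⟦k⟧, f = 0)
    {M N : A} (hM : M ∈ addT T) (hN : N ∈ addT T) (k : ℤ) (hk : 0 < k)
    (f : (DerivedCategory.singleFunctor A 0).obj M ⟶
        ((DerivedCategory.singleFunctor A 0).obj N)⟦k⟧) : f = 0 := by
  obtain ⟨I, s, r, hsr⟩ := hM
  obtain ⟨J, s', r', hsr'⟩ := hN
  have key : ∀ g : (DerivedCategory.singleFunctor A 0).obj (∐ (fun _ : I => T)) ⟶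
        ((DerivedCategory.singleFunctor A 0).obj (∐ (fun _ : J => T)))⟦k⟧, g = 0 := by
    intro g
    have := hsame I
    rw [← cancel_epi (Sigma.desc
      (fun i : I => (DerivedCategory.singleFunctor A 0).map
        (Sigma.ι (fun _ : I => T) i))), comp_zero]
    apply Sigma.hom_ext
    intro i
    rw [comp_zero]
    exact hext k hk J _
  have h1 : (DerivedCategory.singleFunctor A 0).map s ≫
      (DerivedCategory.singleFunctor A 0).map r = 𝟙 _ := by
    rw [← Functor.map_comp, hsr, CategoryTheory.Functor.map_id]
  have h2 : ((DerivedCategory.singleFunctor A 0).map s')⟦k⟧' ≫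
      ((DerivedCategory.singleFunctor A 0).map r')⟦k⟧' = 𝟙 _ := by
    rw [← Functor.map_comp, ← Functor.map_comp, hsr', CategoryTheory.Functor.map_id, CategoryTheory.Functor.map_id]
  have h3 := key ((DerivedCategory.singleFunctor A 0).map r ≫ f ≫
    ((DerivedCategory.singleFunctor A 0).map s')⟦k⟧')
  calc f = ((DerivedCategory.singleFunctor A 0).map s ≫
      (DerivedCategory.singleFunctor A 0).map r) ≫ f ≫
      (((DerivedCategory.singleFunctor A 0).map s')⟦k⟧' ≫
      ((DerivedCategory.singleFunctor A 0).map r')⟦k⟧') := by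
        rw [h1, h2, Category.id_comp, Category.comp_id]
    _ = (DerivedCategory.singleFunctor A 0).map s ≫
      ((DerivedCategory.singleFunctor A 0).map r ≫ f ≫
      ((DerivedCategory.singleFunctor A 0).map s')⟦k⟧') ≫
      ((DerivedCategory.singleFunctor A 0).map r')⟦k⟧' := by simp only [Category.assoc]
    _ = 0 := by rw [h3, zero_comp, comp_zero]

lemma ext_vanish' (hsame : ∀ I : Type v, IsIso (Sigma.desc
      (fun i : I => (DerivedCategory.singleFunctor A 0).map
        (Sigma.ι (fun _ : I => T) i))))
    (hext : ∀ (k : ℤ), 0 < k → ∀ I : Type v,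
      ∀ f : (DerivedCategory.singleFunctor A 0).obj T ⟶
        ((DerivedCategory.singleFunctor A 0).obj (∐ (fun _ : I => T)))⟦k⟧, f = 0)
    {M N : A} (hM : M ∈ addT T) (hN : N ∈ addT T) (i j : ℤ) (hij : i ≠ j)
    (f : (DerivedCategory.singleFunctor A i).obj M ⟶
        (DerivedCategory.singleFunctor A j).obj N) : f = 0 := by
  rcases lt_or_gt_of_ne hij with h | h
  · exact DerivedCategory.TStructure.t.zero_of_isLE_of_isGE f i j h inferInstance inferInstance
  · apply (shiftFunctor (DerivedCategory A) i).map_injective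
    rw [Functor.map_zero]
    let e1 := ((DerivedCategory.singleFunctors A).shiftIso i 0 i (by omega)).app M
    let e2 := ((DerivedCategory.singleFunctors A).shiftIso i (j - i) j (by omega)).app N
    let e3 := ((DerivedCategory.singleFunctors A).shiftIso (i - j) (j - i) 0 (by omega)).app N
    have h0 := ext_vanish T hsame hext hM hN (i - j) (by omega)
      (e1.inv ≫ f⟦i⟧' ≫ e2.hom ≫ e3.inv)
    rw [← cancel_epi e1.inv, ← cancel_mono (e2.hom ≫ e3.inv), comp_zero, zero_comp,
      Category.assoc]
    exact h0

lemma bij_single (hsame : ∀ I : Type v, IsIso (Sigma.desc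
      (fun i : I => (DerivedCategory.singleFunctor A 0).map
        (Sigma.ι (fun _ : I => T) i))))
    (hext : ∀ (k : ℤ), 0 < k → ∀ I : Type v,
      ∀ f : (DerivedCategory.singleFunctor A 0).obj T ⟶
        ((DerivedCategory.singleFunctor A 0).obj (∐ (fun _ : I => T)))⟦k⟧, f = 0)
    {M N : A} (hM : M ∈ addT T) (hN : N ∈ addT T) (i j : ℤ) :
    BijHom (DerivedCategory.Qh (C := A)) ((HomotopyCategory.singleFunctor A i).obj M)
      ((HomotopyCategory.singleFunctor A j).obj N) := by
  by_cases hij : i = j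
  · subst hij
    have hfull : Function.Surjective (fun g : M ⟶ N => (HomotopyCategory.singleFunctor A i).map g) := by
      intro f
      obtain ⟨f', rfl⟩ := (HomotopyCategory.quotient A (ComplexShape.up ℤ)).map_surjective f
      obtain ⟨g, rfl⟩ := (HomologicalComplex.single A (ComplexShape.up ℤ) i).map_surjective f'
      exact ⟨g, rfl⟩
    have hff : Function.Bijective (fun g : M ⟶ N =>
        DerivedCategory.Qh.map ((HomotopyCategory.singleFunctor A i).map g)) :=
      ⟨(DerivedCategory.singleFunctor A i).map_injective,
        (DerivedCategory.singleFunctor A i).map_surjective⟩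
    constructor
    · intro f f' h
      obtain ⟨g, rfl⟩ := hfull f
      obtain ⟨g', rfl⟩ := hfull f'
      rw [hff.1 h]
    · intro f
      obtain ⟨g, hg⟩ := hff.2 f
      exact ⟨_, hg⟩
  · constructor
    · intro f f' _
      obtain ⟨f, rfl⟩ := (HomotopyCategory.quotient A (ComplexShape.up ℤ)).map_surjective f
      obtain ⟨f', rfl⟩ := (HomotopyCategory.quotient A (ComplexShape.up ℤ)).map_surjective f'
      congr 1
      exact HomologicalComplex.from_single_hom_ext
        ((HomologicalComplex.isZero_single_obj_X _ _ _ _ hij).eq_of_tgt _ _)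
    · intro f
      refine ⟨0, ?_⟩
      dsimp only
      rw [Functor.map_zero]
      exact (ext_vanish' T hsame hext hM hN i j hij f).symm

lemma bij_all (hsame : ∀ I : Type v, IsIso (Sigma.desc
      (fun i : I => (DerivedCategory.singleFunctor A 0).map
        (Sigma.ι (fun _ : I => T) i))))
    (hext : ∀ (k : ℤ), 0 < k → ∀ I : Type v,
      ∀ f : (DerivedCategory.singleFunctor A 0).obj T ⟶
        ((DerivedCategory.singleFunctor A 0).obj (∐ (fun _ : I => T)))⟦k⟧, f = 0)
    (X Y : CochainComplex A ℤ) (hX : isBoundedAddT T X) (hY : isBoundedAddT T Y) :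
    BijAll (DerivedCategory.Qh (C := A))
      ((HomotopyCategory.quotient A (ComplexShape.up ℤ)).obj X)
      ((HomotopyCategory.quotient A (ComplexShape.up ℤ)).obj Y) := by
  refine devissage T (fun Z => BijAll (DerivedCategory.Qh (C := A)) Z
    ((HomotopyCategory.quotient A (ComplexShape.up ℤ)).obj Y))
    (fun _ _ e h => h.iso e (Iso.refl _)) ?_
    (fun Δ hΔ h1 h3 => BijAll.left _ Δ hΔ _ h1 h3) X hX
  intro i M hM
  refine devissage T (fun Z => BijAll (DerivedCategory.Qh (C := A)) _ Z)
    (fun _ _ e h => h.iso (Iso.refl _) e) ?_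
    (fun Δ hΔ h1 h3 => BijAll.right _ Δ hΔ _ h1 h3) Y hY
  intro j N hN m n
  exact (bij_single T hsame hext hM hN (i - m) (j - n)).iso
    (((HomotopyCategory.singleFunctors A).shiftIso m (i - m) i (by omega)).app M).symm
    (((HomotopyCategory.singleFunctors A).shiftIso n (j - n) j (by omega)).app N).symm

lemma bij_main (hsame : ∀ I : Type v, IsIso (Sigma.desc
      (fun i : I => (DerivedCategory.singleFunctor A 0).map
        (Sigma.ι (fun _ : I => T) i))))
    (hext : ∀ (k : ℤ), 0 < k → ∀ I : Type v,
      ∀ f : (DerivedCategory.singleFunctor A 0).obj T ⟶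
        ((DerivedCategory.singleFunctor A 0).obj (∐ (fun _ : I => T)))⟦k⟧, f = 0)
    (X Y : CochainComplex A ℤ) (hX : isBoundedAddT T X) (hY : isBoundedAddT T Y) :
    BijHom (DerivedCategory.Qh (C := A))
      ((HomotopyCategory.quotient A (ComplexShape.up ℤ)).obj X)
      ((HomotopyCategory.quotient A (ComplexShape.up ℤ)).obj Y) :=
  (bij_all T hsame hext X Y hX hY 0 0).iso ((shiftFunctorZero _ ℤ).app _)
    ((shiftFunctorZero _ ℤ).app _)

end FF

section Thick
set_option linter.unusedSectionVars false

lemma bounded_shift {X : CochainComplex A ℤ} (h : isBoundedAddT T X) (n : ℤ) :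
    isBoundedAddT T (X⟦n⟧) := by
  obtain ⟨h, a, b, hab⟩ := h
  exact ⟨fun i => h (i + n), a - n, b - n, fun i hi => hab (i + n) (by omega)⟩

lemma bounded_cone {X Y : CochainComplex A ℤ} (hX : isBoundedAddT T X) (hY : isBoundedAddT T Y)
    (f : X ⟶ Y) : isBoundedAddT T (CochainComplex.mappingCone f) := by
  obtain ⟨hX, a, b, hab⟩ := hX
  obtain ⟨hY, a', b', hab'⟩ := hY
  have e : ∀ n : ℤ, (CochainComplex.mappingCone f).X n ≅ (X.X (n + 1) ⊞ Y.X n : A) := fun n =>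
    HomologicalComplex.homotopyCofiber.XIsoBiprod f n (n + 1) (by simp)
  refine ⟨fun n => addT_iso T (e n).symm (addT_biprod T (hX _) (hY _)),
    min (a - 1) a', max b b', fun n hn => IsZero.of_iso ?_ (e n)⟩
  rw [biprod_isZero_iff]
  exact ⟨hab _ (by omega), hab' _ (by omega)⟩

lemma bounded_single {M : A} (hM : M ∈ addT T) (n : ℤ) :
    isBoundedAddT T ((HomologicalComplex.single A (ComplexShape.up ℤ) n).obj M) := by
  refine ⟨fun i => ?_, n, n, fun i hi =>
    HomologicalComplex.isZero_single_obj_X _ _ _ _ (by omega)⟩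
  by_cases h : i = n
  · subst h
    exact addT_iso T (HomologicalComplex.singleObjXSelf (ComplexShape.up ℤ) i M).symm hM
  · exact addT_zero T (HomologicalComplex.isZero_single_obj_X _ _ _ _ h)

lemma Q_surj {X Y : CochainComplex A ℤ}
    (h : BijHom (DerivedCategory.Qh (C := A))
      ((HomotopyCategory.quotient A (ComplexShape.up ℤ)).obj X)
      ((HomotopyCategory.quotient A (ComplexShape.up ℤ)).obj Y))
    (g : DerivedCategory.Q.obj X ⟶ DerivedCategory.Q.obj Y) :
    ∃ f : X ⟶ Y, DerivedCategory.Q.map f = g := by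
  obtain ⟨f, hf⟩ := h.2 g
  obtain ⟨f, rfl⟩ := (HomotopyCategory.quotient A (ComplexShape.up ℤ)).map_surjective f
  exact ⟨f, hf⟩

lemma boundedSet_iso {X Y : DerivedCategory A} (e : X ≅ Y) (h : X ∈ boundedAddTSet T) :
    Y ∈ boundedAddTSet T := by
  obtain ⟨Z, hZ, ⟨e'⟩⟩ := h
  exact ⟨Z, hZ, ⟨e.symm ≪≫ e'⟩⟩

lemma boundedSet_shift {X : DerivedCategory A} (h : X ∈ boundedAddTSet T) (n : ℤ) :
    X⟦n⟧ ∈ boundedAddTSet T := by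
  obtain ⟨Z, hZ, ⟨e'⟩⟩ := h
  exact ⟨Z⟦n⟧, bounded_shift T hZ n, ⟨(shiftFunctor _ n).mapIso e' ≪≫
    ((DerivedCategory.Q.commShiftIso n).app Z).symm⟩⟩

lemma boundedSet_cone
    (hb : ∀ X Y : CochainComplex A ℤ, isBoundedAddT T X → isBoundedAddT T Y →
      BijHom (DerivedCategory.Qh (C := A))
      ((HomotopyCategory.quotient A (ComplexShape.up ℤ)).obj X)
      ((HomotopyCategory.quotient A (ComplexShape.up ℤ)).obj Y))
    (Δ : Triangle (DerivedCategory A)) (hΔ : Δ ∈ distTriang _)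
    (h1 : Δ.obj₁ ∈ boundedAddTSet T) (h2 : Δ.obj₂ ∈ boundedAddTSet T) :
    Δ.obj₃ ∈ boundedAddTSet T := by
  obtain ⟨X, hX, ⟨e1⟩⟩ := h1
  obtain ⟨Y, hY, ⟨e2⟩⟩ := h2
  obtain ⟨f, hf⟩ := Q_surj (hb X Y hX hY) (e1.inv ≫ Δ.mor₁ ≫ e2.hom)
  refine ⟨_, bounded_cone T hX hY f, ?_⟩
  obtain ⟨e, -⟩ := exists_iso_of_arrow_iso Δ
    (DerivedCategory.Q.mapTriangle.obj (CochainComplex.mappingCone.triangle f)) hΔ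
    (DerivedCategory.mappingCone_triangle_distinguished f)
    (Arrow.isoMk (f := Arrow.mk Δ.mor₁) (g := Arrow.mk (DerivedCategory.Q.map f)) e1 e2 (by
      simp [hf]))
  exact ⟨Triangle.π₃.mapIso e⟩

lemma boundedSet_ext
    (hb : ∀ X Y : CochainComplex A ℤ, isBoundedAddT T X → isBoundedAddT T Y →
      BijHom (DerivedCategory.Qh (C := A))
      ((HomotopyCategory.quotient A (ComplexShape.up ℤ)).obj X)
      ((HomotopyCategory.quotient A (ComplexShape.up ℤ)).obj Y))
    (Δ : Triangle (DerivedCategory A)) (hΔ : Δ ∈ distTriang _)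
    (h1 : Δ.obj₁ ∈ boundedAddTSet T) (h3 : Δ.obj₃ ∈ boundedAddTSet T) :
    Δ.obj₂ ∈ boundedAddTSet T :=
  boundedSet_cone T hb Δ.invRotate (inv_rot_of_distTriang _ hΔ)
    (boundedSet_shift T h3 (-1)) h1

end Thick

section Swindle

variable {B : Type u} [Category.{v} B] [Abelian B] [HasCoproducts.{v} B]

/-- functoriality of countable copowers -/
noncomputable def gmap {M N : B} (f : M ⟶ N) :
    (∐ (fun _ : ULift.{v} ℕ => M)) ⟶ (∐ (fun _ : ULift.{v} ℕ => N)) :=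
  Sigma.desc (fun i => f ≫ Sigma.ι (fun _ : ULift.{v} ℕ => N) i)

lemma ι_gmap {M N : B} (f : M ⟶ N) (i : ULift.{v} ℕ) :
    Sigma.ι (fun _ : ULift.{v} ℕ => M) i ≫ gmap f =
      f ≫ Sigma.ι (fun _ : ULift.{v} ℕ => N) i := by
  simp [gmap]

/-- projection -/
noncomputable def gp (M : B) : (∐ (fun _ : ULift.{v} ℕ => M)) ⟶ M :=
  Sigma.desc (fun n : ULift.{v} ℕ => if n.down = 0 then 𝟙 M else 0)

lemma ι_gp (M : B) (i : ULift.{v} ℕ) : Sigma.ι (fun _ : ULift.{v} ℕ => M) i ≫ gp M =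
    if i.down = 0 then 𝟙 M else 0 := by simp [gp]

/-- shift -/
noncomputable def gs (M : B) :
    (∐ (fun _ : ULift.{v} ℕ => M)) ⟶ (∐ (fun _ : ULift.{v} ℕ => M)) :=
  Sigma.desc (fun n : ULift.{v} ℕ => Sigma.ι (fun _ : ULift.{v} ℕ => M) ⟨n.down + 1⟩)

lemma ι_gs (M : B) (i : ULift.{v} ℕ) : Sigma.ι (fun _ : ULift.{v} ℕ => M) i ≫ gs M =
    Sigma.ι (fun _ : ULift.{v} ℕ => M) ⟨i.down + 1⟩ := by simp [gs]

/-- inverse shift -/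
noncomputable def gt (M : B) :
    (∐ (fun _ : ULift.{v} ℕ => M)) ⟶ (∐ (fun _ : ULift.{v} ℕ => M)) :=
  Sigma.desc (fun n : ULift.{v} ℕ => if n.down = 0 then 0 else
    Sigma.ι (fun _ : ULift.{v} ℕ => M) ⟨n.down - 1⟩)

lemma ι_gt (M : B) (i : ULift.{v} ℕ) : Sigma.ι (fun _ : ULift.{v} ℕ => M) i ≫ gt M =
    if i.down = 0 then 0 else Sigma.ι (fun _ : ULift.{v} ℕ => M) ⟨i.down - 1⟩ := by simp [gt]

lemma gmap_id (M : B) : gmap (𝟙 M) = 𝟙 _ := by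
  apply Sigma.hom_ext; intro i; simp [ι_gmap]

lemma gmap_comp {M N P : B} (f : M ⟶ N) (g : N ⟶ P) : gmap (f ≫ g) = gmap f ≫ gmap g := by
  apply Sigma.hom_ext; intro i
  rw [ι_gmap, ← Category.assoc (Sigma.ι _ i), ι_gmap, Category.assoc, Category.assoc, ι_gmap]

lemma gmap_add {M N : B} (f g : M ⟶ N) : gmap (f + g) = gmap f + gmap g := by
  apply Sigma.hom_ext; intro i
  rw [Preadditive.comp_add, ι_gmap, ι_gmap, ι_gmap, Preadditive.add_comp]

lemma gp_nat {M N : B} (f : M ⟶ N) : gmap f ≫ gp N = gp M ≫ f := by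
  apply Sigma.hom_ext; intro i
  rw [← Category.assoc, ← Category.assoc, ι_gmap, ι_gp, Category.assoc, ι_gp]
  split_ifs <;> simp

lemma gs_nat {M N : B} (f : M ⟶ N) : gmap f ≫ gs N = gs M ≫ gmap f := by
  apply Sigma.hom_ext; intro i
  rw [← Category.assoc, ← Category.assoc, ι_gmap, ι_gs, Category.assoc, ι_gs, ι_gmap]

lemma gt_nat {M N : B} (f : M ⟶ N) : gmap f ≫ gt N = gt M ≫ gmap f := by
  apply Sigma.hom_ext; intro i
  rw [← Category.assoc, ← Category.assoc, ι_gmap, ι_gt, Category.assoc, ι_gt]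
  split_ifs
  · simp
  · rw [ι_gmap]

lemma gip (M : B) : Sigma.ι (fun _ : ULift.{v} ℕ => M) ⟨0⟩ ≫ gp M = 𝟙 M := by
  rw [ι_gp]; simp

lemma gst (M : B) : gs M ≫ gt M = 𝟙 _ := by
  apply Sigma.hom_ext; intro i
  rw [← Category.assoc, ι_gs, ι_gt]; simp

lemma gsum (M : B) : gp M ≫ Sigma.ι (fun _ : ULift.{v} ℕ => M) ⟨0⟩ + gt M ≫ gs M = 𝟙 _ := by
  apply Sigma.hom_ext; intro i
  rw [Preadditive.comp_add, ← Category.assoc, ← Category.assoc, ι_gp, ι_gt]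
  obtain ⟨_ | i⟩ := i
  · simp
  · simp [ι_gs]

variable (B) in
/-- The coproduct of countably many copies. -/
noncomputable def cG : B ⥤ B where
  obj M := ∐ (fun _ : ULift.{v} ℕ => M)
  map f := gmap f
  map_id M := gmap_id M
  map_comp f g := gmap_comp f g

instance : (cG B).Additive where
  map_add {_ _ f g} := gmap_add f g

variable (B) in
/-- inclusion of the zeroth factor -/
noncomputable def cGi : 𝟭 B ⟶ cG B where
  app M := Sigma.ι (fun _ : ULift.{v} ℕ => M) ⟨0⟩
  naturality _ _ f := (ι_gmap f _).symm

variable (B) in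
/-- projection to the zeroth factor -/
noncomputable def cGp : cG B ⟶ 𝟭 B where
  app M := gp M
  naturality _ _ f := gp_nat f

variable (B) in
/-- shift -/
noncomputable def cGs : cG B ⟶ cG B where
  app M := gs M
  naturality _ _ f := gs_nat f

variable (B) in
/-- inverse shift -/
noncomputable def cGt : cG B ⟶ cG B where
  app M := gt M
  naturality _ _ f := gt_nat f

/-- The complex of countable copowers. -/
noncomputable abbrev cW (Y : CochainComplex B ℤ) : CochainComplex B ℤ :=
  ((cG B).mapHomologicalComplex (ComplexShape.up ℤ)).obj Y

lemma cW_data (Y : CochainComplex B ℤ) : ∃ (i : Y ⟶ cW Y) (p : cW Y ⟶ Y) (σ τ : cW Y ⟶ cW Y),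
    i ≫ p = 𝟙 _ ∧ σ ≫ τ = 𝟙 _ ∧ p ≫ i + τ ≫ σ = 𝟙 _ ∧
    ∀ e : Y ⟶ Y, 
      e ≫ i = i ≫ ((cG B).mapHomologicalComplex (ComplexShape.up ℤ)).map e ∧
      ((cG B).mapHomologicalComplex (ComplexShape.up ℤ)).map e ≫ p = p ≫ e ∧
      ((cG B).mapHomologicalComplex (ComplexShape.up ℤ)).map e ≫ σ =
        σ ≫ ((cG B).mapHomologicalComplex (ComplexShape.up ℤ)).map e ∧
      ((cG B).mapHomologicalComplex (ComplexShape.up ℤ)).map e ≫ τ =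
        τ ≫ ((cG B).mapHomologicalComplex (ComplexShape.up ℤ)).map e := by
  refine ⟨⟨fun n => (cGi B).app (Y.X n), fun m n _ => ((cGi B).naturality (Y.d m n)).symm⟩,
    ⟨fun n => (cGp B).app (Y.X n), fun m n _ => ((cGp B).naturality (Y.d m n)).symm⟩,
    ⟨fun n => (cGs B).app (Y.X n), fun m n _ => ((cGs B).naturality (Y.d m n)).symm⟩,
    ⟨fun n => (cGt B).app (Y.X n), fun m n _ => ((cGt B).naturality (Y.d m n)).symm⟩,
    ?_, ?_, ?_, fun e => ⟨?_, ?_, ?_, ?_⟩⟩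
  · ext n; exact gip (Y.X n)
  · ext n; exact gst (Y.X n)
  · ext n; exact gsum (Y.X n)
  · ext n; exact (cGi B).naturality (e.f n)
  · ext n; exact (cGp B).naturality (e.f n)
  · ext n; exact (cGs B).naturality (e.f n)
  · ext n; exact (cGt B).naturality (e.f n)

lemma swindle_alg {D : Type*} [Category D] [Preadditive D] [HasBinaryBiproducts D] {X Y W : D}
    (s : X ⟶ Y) (r : Y ⟶ X) (e : Y ⟶ Y) (i : Y ⟶ W) (p : W ⟶ Y) (σ τ E : W ⟶ W)
    (hsr : s ≫ r = 𝟙 X) (hrs : r ≫ s = e) (hip : i ≫ p = 𝟙 Y) (hst : σ ≫ τ = 𝟙 W)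
    (hsum : p ≫ i + τ ≫ σ = 𝟙 W) (hE : E ≫ E = E) (hi : e ≫ i = i ≫ E) (hp : E ≫ p = p ≫ e)
    (hs : E ≫ σ = σ ≫ E) (ht : E ≫ τ = τ ≫ E) : Nonempty (W ≅ W ⊞ X) := by
  have hsp : σ ≫ p = 0 := by
    have h1 : σ ≫ p ≫ i = 0 := by
      have := congrArg (fun f => σ ≫ f) hsum
      simpa [Preadditive.comp_add, reassoc_of% hst] using this
    have h2 := congrArg (fun f => f ≫ p) h1
    simpa [hip] using h2
  have hit : i ≫ τ = 0 := by
    have h1 : i ≫ τ ≫ σ = 0 := by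
      have := congrArg (fun f => i ≫ f) hsum
      simpa [Preadditive.comp_add, reassoc_of% hip] using this
    have h2 := congrArg (fun f => f ≫ τ) h1
    simpa [hst] using h2
  have hts : τ ≫ σ = 𝟙 W - p ≫ i := by rw [← hsum]; abel
  have hsi : s ≫ i ≫ E = s ≫ i := by rw [← hi, ← hrs]; simp [reassoc_of% hsr]
  have hpr : E ≫ p ≫ r = p ≫ r := by rw [reassoc_of% hp, ← hrs]; simp [hsr]
  have hqj : p ≫ r ≫ s ≫ i = E ≫ p ≫ i := by rw [reassoc_of% hrs, reassoc_of% hp]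
  let φ : W ⟶ W := E ≫ σ + (𝟙 W - E)
  let ψ : W ⟶ W := τ ≫ E + (𝟙 W - E)
  have hφψ : φ ≫ ψ = 𝟙 W := by
    simp only [φ, ψ, Preadditive.comp_add, Preadditive.add_comp, Preadditive.comp_sub,
      Preadditive.sub_comp, Category.assoc, Category.comp_id, Category.id_comp]
    rw [reassoc_of% hst, ← hs, reassoc_of% hE, reassoc_of% ht, hE]
    abel
  have hψφ : ψ ≫ φ = 𝟙 W - E ≫ p ≫ i := by
    simp only [φ, ψ, Preadditive.comp_add, Preadditive.add_comp, Preadditive.comp_sub,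
      Preadditive.sub_comp, Category.assoc, Category.comp_id, Category.id_comp]
    rw [reassoc_of% hE, hE, ← reassoc_of% ht, hts, Preadditive.comp_sub, Category.comp_id]
    abel
  have hφq : φ ≫ p ≫ r = 0 := by
    simp only [φ, Preadditive.add_comp, Preadditive.sub_comp, Category.assoc, Category.id_comp]
    rw [reassoc_of% hsp, hpr]; simp
  have hjψ : (s ≫ i) ≫ ψ = 0 := by
    simp only [ψ, Preadditive.comp_add, Preadditive.comp_sub, Category.assoc, Category.comp_id]
    rw [reassoc_of% hit, hsi]; simp
  refine ⟨⟨biprod.lift ψ (p ≫ r), biprod.desc φ (s ≫ i), ?_, ?_⟩⟩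
  · rw [biprod.lift_desc, hψφ, Category.assoc, hqj]; abel
  · ext
    · simp [hφψ]
    · simp [hφq]
    · simpa using hjψ
    · simp [reassoc_of% hip, hsr]

end Swindle

section Summand
set_option linter.unusedSectionVars false

lemma addT_cG {M : A} (hM : M ∈ addT T) : (cG A).obj M ∈ addT T := by
  obtain ⟨I, s, r, hsr⟩ := hM
  let a : (∐ (fun _ : ULift.{v} ℕ => (∐ (fun _ : I => T)))) ⟶
      (∐ (fun _ : ULift.{v} ℕ × I => T)) :=
    Sigma.desc (fun n => Sigma.desc (fun i => Sigma.ι (fun _ : ULift.{v} ℕ × I => T) (n, i)))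
  let b : (∐ (fun _ : ULift.{v} ℕ × I => T)) ⟶
      (∐ (fun _ : ULift.{v} ℕ => (∐ (fun _ : I => T)))) :=
    Sigma.desc (fun x => Sigma.ι (fun _ : I => T) x.2 ≫
      Sigma.ι (fun _ : ULift.{v} ℕ => (∐ (fun _ : I => T))) x.1)
  have hab : a ≫ b = 𝟙 _ := by
    apply Sigma.hom_ext; intro n
    apply Sigma.hom_ext; intro i
    simp [a, b]
  refine ⟨ULift.{v} ℕ × I, gmap s ≫ a, b ≫ gmap r, ?_⟩
  have : (gmap s ≫ a) ≫ b ≫ gmap r = 𝟙 _ := by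
    rw [Category.assoc, reassoc_of% hab, ← gmap_comp, hsr, gmap_id]
  exact this

lemma bounded_cW {Y : CochainComplex A ℤ} (h : isBoundedAddT T Y) : isBoundedAddT T (cW Y) := by
  obtain ⟨h, a, b, hab⟩ := h
  exact ⟨fun n => addT_cG T (h n), a, b, fun n hn => (cG A).map_isZero (hab n hn)⟩

lemma Q_eq_of_homotopy {X Y : CochainComplex A ℤ} {f g : X ⟶ Y} (h : Homotopy f g) :
    DerivedCategory.Q.map f = DerivedCategory.Q.map g := by
  have := HomotopyCategory.eq_of_homotopy f g h
  exact congrArg (DerivedCategory.Qh (C := A)).map this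

lemma boundedSet_summand
    (hb : ∀ X Y : CochainComplex A ℤ, isBoundedAddT T X → isBoundedAddT T Y →
      BijHom (DerivedCategory.Qh (C := A))
      ((HomotopyCategory.quotient A (ComplexShape.up ℤ)).obj X)
      ((HomotopyCategory.quotient A (ComplexShape.up ℤ)).obj Y))
    {X Z : DerivedCategory A} (s : X ⟶ Z) (r : Z ⟶ X) (hsr : s ≫ r = 𝟙 X)
    (hZ : Z ∈ boundedAddTSet T) : X ∈ boundedAddTSet T := by
  obtain ⟨Y, hY, ⟨u⟩⟩ := hZ
  obtain ⟨e, he⟩ := Q_surj (hb Y Y hY hY) ((u.inv ≫ r) ≫ (s ≫ u.hom))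
  have hsr' : (s ≫ u.hom) ≫ (u.inv ≫ r) = 𝟙 X := by simp [hsr]
  have hee : (HomotopyCategory.quotient A (ComplexShape.up ℤ)).map (e ≫ e) =
      (HomotopyCategory.quotient A (ComplexShape.up ℤ)).map e := by
    apply (hb Y Y hY hY).1
    change DerivedCategory.Q.map (e ≫ e) = DerivedCategory.Q.map e
    rw [Functor.map_comp, he]
    simp [reassoc_of% hsr]
  obtain ⟨i, p, σ, τ, hip, hst, hsum, hnat⟩ := cW_data Y
  obtain ⟨h1, h2, h3, h4⟩ := hnat e
  have hE := Q_eq_of_homotopy ((cG A).mapHomotopy (HomotopyCategory.homotopyOfEq _ _ hee))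
  rw [Functor.map_comp, Functor.map_comp] at hE
  obtain ⟨w⟩ := swindle_alg (s ≫ u.hom) (u.inv ≫ r) (DerivedCategory.Q.map e)
    (DerivedCategory.Q.map i) (DerivedCategory.Q.map p) (DerivedCategory.Q.map σ)
    (DerivedCategory.Q.map τ)
    (DerivedCategory.Q.map (((cG A).mapHomologicalComplex (ComplexShape.up ℤ)).map e))
    hsr' he.symm (by rw [← Functor.map_comp, hip, CategoryTheory.Functor.map_id])
    (by rw [← Functor.map_comp, hst, CategoryTheory.Functor.map_id])
    (by rw [← Functor.map_comp, ← Functor.map_comp, ← Functor.map_add, hsum,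
          CategoryTheory.Functor.map_id])
    hE (by rw [← Functor.map_comp, h1, Functor.map_comp])
    (by rw [← Functor.map_comp, h2, Functor.map_comp])
    (by rw [← Functor.map_comp, h3, Functor.map_comp])
    (by rw [← Functor.map_comp, h4, Functor.map_comp])
  have hW : DerivedCategory.Q.obj (cW Y) ∈ boundedAddTSet T :=
    ⟨_, bounded_cW T hY, ⟨Iso.refl _⟩⟩
  exact boundedSet_cone T hb _ (binaryBiproductTriangle_distinguished
    (DerivedCategory.Q.obj (cW Y)) X) hW (boundedSet_iso T w hW)

end Summand

/-- Let `A` be an abelian category whose derived category has Hom sets and coproducts, and let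
`T` be an object of `A` such that (i) the coproduct `T^{(I)}` is the same in `A` and in `D(A)`
for every set `I` and (ii) `Ext^k_A(T, T^{(I)}) = 0` for all `k > 0` and all sets `I`.  Then
the composite `K^b(Add(T)) ↪ K(A) → D(A)` is fully faithful, and the smallest thick
subcategory of `D(A)` containing `Sum(T)` consists precisely of the complexes isomorphic in
`D(A)` to bounded complexes of objects of `Add(T)`. -/
theorem stmt13
    (hsame : ∀ I : Type v, IsIso (Sigma.desc
      (fun i : I => (DerivedCategory.singleFunctor A 0).map
        (Sigma.ι (fun _ : I => T) i))))
    (hext : ∀ (k : ℤ), 0 < k → ∀ I : Type v,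
      ∀ f : (DerivedCategory.singleFunctor A 0).obj T ⟶
        ((DerivedCategory.singleFunctor A 0).obj (∐ (fun _ : I => T)))⟦k⟧, f = 0) :
    (∀ X Y : CochainComplex A ℤ, isBoundedAddT T X → isBoundedAddT T Y →
      Function.Bijective (fun f :
          ((HomotopyCategory.quotient A (ComplexShape.up ℤ)).obj X ⟶
            (HomotopyCategory.quotient A (ComplexShape.up ℤ)).obj Y) =>
        DerivedCategory.Qh.map f)) ∧
    IsThickSet (DerivedCategory A) (boundedAddTSet T) ∧
    sumTSet T ⊆ boundedAddTSet T ∧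
    (∀ S : Set (DerivedCategory A), IsThickSet (DerivedCategory A) S →
      sumTSet T ⊆ S → boundedAddTSet T ⊆ S) := by
  have hb := bij_main T hsame hext
  refine ⟨fun X Y hX hY => hb X Y hX hY, ⟨?_, ?_, ?_, ?_, ?_⟩, ?_, ?_⟩
  · intro Z hZ
    refine ⟨(HomologicalComplex.single A (ComplexShape.up ℤ) 0).obj (∐ (fun _ : PEmpty.{v+1} => T)),
      bounded_single T (addT_sum T _) 0, ⟨hZ.iso ?_⟩⟩
    apply Functor.map_isZero
    apply Functor.map_isZero
    rw [IsZero.iff_id_eq_zero]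
    apply Sigma.hom_ext
    rintro ⟨⟩
  · exact fun X Y e h => boundedSet_iso T e h
  · exact fun X h n => boundedSet_shift T h n
  · exact fun Δ hΔ h1 h3 => boundedSet_ext T hb Δ hΔ h1 h3
  · rintro X Y ⟨s, r, hsr⟩ hY
    exact boundedSet_summand T hb s r hsr hY
  · rintro Z ⟨I, ⟨e⟩⟩
    exact ⟨_, bounded_single T (addT_sum T I) 0, ⟨e⟩⟩
  · rintro S hS hsub Z ⟨X, hX, ⟨e⟩⟩
    refine hS.iso e.symm ?_
    refine devissage T (fun Z => DerivedCategory.Qh.obj Z ∈ S)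
      (fun X Y e h => hS.iso (DerivedCategory.Qh.mapIso e) h) ?_
      (fun Δ hΔ h1 h3 => hS.ext₂ _ (DerivedCategory.Qh.map_distinguished Δ hΔ) h1 h3) X hX
    rintro n M ⟨I, s, r, hsr⟩
    have h0 : (DerivedCategory.singleFunctor A 0).obj M ∈ S := by
      refine hS.summand ⟨(DerivedCategory.singleFunctor A 0).map s,
        (DerivedCategory.singleFunctor A 0).map r, ?_⟩ (hsub ⟨I, ⟨Iso.refl _⟩⟩)
      rw [← Functor.map_comp, hsr, CategoryTheory.Functor.map_id]
    exact hS.iso (((DerivedCategory.singleFunctors A).shiftIso (-n) n 0 (by omega)).app M)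
      (hS.shift h0 (-n))
end

section
/- Let A be an AB3 abelian category, T an object of A satisfying: coproducts of copies of T are the same in A and D(A) and Ext^k_A(T, T^{(I)}) = 0 for all k > 0 and sets I. Let Y = ⋂_{k>0} Ker(Ext^k_A(T, ?)) be the class of objects N with Ext^k_A(T,N) = 0 for all k > 0. If there exists m ∈ ℕ with Pres^m(T) = Y, then Pres^m(Y) ⊆ Y; that is, for any exact sequence Y^0 → Y^1 → ⋯ → Y^m in A with all Y^j ∈ Y, the cokernel of the last map lies in Y. -/
open CategoryTheory CategoryTheory.Limits CategoryTheory.Pretriangulated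

universe w v u

variable {A : Type u} [Category.{v} A] [Abelian A] [HasCoproducts.{v} A]
  [HasDerivedCategory.{w} A] [HasCoproducts.{v} (DerivedCategory A)] (T : A)

/-- `Sum(T)`: objects isomorphic to a set-indexed coproduct of copies of `T`. -/
def sumT : Set A := {X | ∃ I : Type v, Nonempty (X ≅ ∐ (fun _ : I => T))}

/-- `Y = ⋂_{k>0} Ker(Ext^k_A(T, ?))`, with `Ext` computed as morphisms in the derived
category. -/
def YSet : Set A :=
  {N | ∀ k : ℤ, 0 < k → ∀ f : (DerivedCategory.singleFunctor A 0).obj T ⟶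
    ((DerivedCategory.singleFunctor A 0).obj N)⟦k⟧, f = 0}

/-- `Pres^n(T)`: objects `X` admitting an exact sequence
`Σ^{-n} → ⋯ → Σ^{-1} → Σ^0 → X → 0` with all `Σ^{-k}` in `Sum(T)`. -/
def presSet (n : ℕ) : Set A :=
  {X | ∃ S : ComposableArrows A (n + 1), S.Exact ∧ Epi (S.map' n (n + 1)) ∧
    (∀ (i : ℕ) (hi : i ≤ n), S.obj' i (by omega) ∈ sumT T) ∧
    Nonempty (S.obj' (n + 1) ≅ X)}

set_option linter.unusedSectionVars false

lemma sumT_sub_Y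
    (hext : ∀ (k : ℤ), 0 < k → ∀ I : Type v,
      ∀ f : (DerivedCategory.singleFunctor A 0).obj T ⟶
        ((DerivedCategory.singleFunctor A 0).obj (∐ (fun _ : I => T)))⟦k⟧, f = 0)
    {X : A} (hX : X ∈ sumT T) : X ∈ YSet T := by
  obtain ⟨I, ⟨e⟩⟩ := hX
  intro k hk f
  have := hext k hk I (f ≫ ((DerivedCategory.singleFunctor A 0).map e.hom)⟦k⟧')
  rwa [← cancel_mono (((DerivedCategory.singleFunctor A 0).map e.hom)⟦k⟧'), zero_comp]

lemma Y_ext {S : ShortComplex A} (hS : S.ShortExact) (h1 : S.X₁ ∈ YSet T)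
    (h3 : S.X₃ ∈ YSet T) : S.X₂ ∈ YSet T := by
  intro k hk f
  have hT := hS.singleTriangle_distinguished
  have ex := (preadditiveCoyoneda.obj (Opposite.op
    ((DerivedCategory.singleFunctor A 0).obj T))).homologySequence_exact₂ _ hT k
  rw [ShortComplex.ab_exact_iff] at ex
  obtain ⟨x, hx⟩ := ex f (h3 k hk _)
  rw [← hx, show x = 0 from h1 k hk x]
  exact map_zero _

lemma Y_ker {S : ShortComplex A} (hS : S.ShortExact) (h2 : S.X₂ ∈ YSet T)
    (h3 : S.X₃ ∈ YSet T) (hl : ∀ f : T ⟶ S.X₃, ∃ g : T ⟶ S.X₂, g ≫ S.g = f) :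
    S.X₁ ∈ YSet T := by
  intro k hk f
  have hT := hS.singleTriangle_distinguished
  rcases (show k = 1 ∨ 1 < k by omega) with rfl | hk1
  · obtain ⟨g, hg⟩ := Triangle.coyoneda_exact₁ _ hT f (h2 1 hk _)
    obtain ⟨g, rfl⟩ := (DerivedCategory.singleFunctor A 0).map_surjective g
    obtain ⟨g, rfl⟩ := hl g
    have z := comp_distTriang_mor_zero₂₃ _ hT
    rw [hg, Functor.map_comp]
    refine (Category.assoc _ _ _).trans ?_
    exact (congrArg (fun t => (DerivedCategory.singleFunctor A 0).map g ≫ t) z).trans comp_zero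
  · have ex := (preadditiveCoyoneda.obj (Opposite.op
      ((DerivedCategory.singleFunctor A 0).obj T))).homologySequence_exact₁ _ hT (k-1) k (by omega)
    rw [ShortComplex.ab_exact_iff] at ex
    obtain ⟨x, hx⟩ := ex f (h2 k hk _)
    rw [← hx, show x = 0 from h3 (k-1) (by omega) x]
    exact map_zero _

/-- Iterated presentations. -/
def PI (P : Set A) : ℕ → Set A
  | 0 => {X | ∃ Y ∈ P, ∃ p : Y ⟶ X, Epi p}
  | n + 1 => {X | ∃ Y ∈ P, ∃ Z ∈ PI P n, ∃ (i : Z ⟶ Y) (p : Y ⟶ X) (w : i ≫ p = 0),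
      (ShortComplex.mk i p w).ShortExact}

/-- Pullback of a short exact sequence. -/
lemma pb_ses {K Z' Z W : A} (k : K ⟶ Z') (g : Z' ⟶ Z) (w : k ≫ g = 0)
    (h : (ShortComplex.mk k g w).ShortExact) (r : W ⟶ Z) :
    (ShortComplex.mk (pullback.lift 0 k (by simp [w]) : K ⟶ pullback r g) (pullback.fst r g)
      (by simp [pullback.lift_fst, pullback.lift_snd])).ShortExact := by
  have := h.mono_f
  have := h.epi_g
  dsimp at *
  refine ShortComplex.ShortExact.mk' ?_ ?_ ?_
  · rw [ShortComplex.exact_iff_exact_up_to_refinements]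
    intro B t ht
    dsimp at t ht
    obtain ⟨B', π, hπ, x, hx⟩ := h.exact.exact_up_to_refinements (t ≫ pullback.snd r g) (by
      dsimp; rw [Category.assoc, ← pullback.condition, ← Category.assoc, ht, zero_comp])
    dsimp at x hx
    refine ⟨B', π, hπ, x, ?_⟩
    dsimp
    ext
    · simp [ht, pullback.lift_fst, pullback.lift_snd]
    · simpa [pullback.lift_fst, pullback.lift_snd] using hx
  · dsimp
    have : Mono ((pullback.lift 0 k (by simp [w]) : K ⟶ pullback r g) ≫ pullback.snd r g) := by
      simpa [pullback.lift_fst, pullback.lift_snd]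
    exact mono_of_mono _ (pullback.snd r g)
  · dsimp; infer_instance

lemma pb_ses' {K Z' Z W : A} (k : K ⟶ Z') (g : Z' ⟶ Z) (w : k ≫ g = 0)
    (h : (ShortComplex.mk k g w).ShortExact) (r : W ⟶ Z) :
    (ShortComplex.mk (pullback.lift k 0 (by simp [w]) : K ⟶ pullback g r) (pullback.snd g r)
      (by simp [pullback.lift_fst, pullback.lift_snd])).ShortExact := by
  have := h.mono_f
  have := h.epi_g
  dsimp at *
  refine ShortComplex.ShortExact.mk' ?_ ?_ ?_
  · rw [ShortComplex.exact_iff_exact_up_to_refinements]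
    intro B t ht
    dsimp at t ht
    obtain ⟨B', π, hπ, x, hx⟩ := h.exact.exact_up_to_refinements (t ≫ pullback.fst g r) (by
      dsimp; rw [Category.assoc, pullback.condition, ← Category.assoc, ht, zero_comp])
    dsimp at x hx
    refine ⟨B', π, hπ, x, ?_⟩
    dsimp
    ext
    · simpa [pullback.lift_fst, pullback.lift_snd] using hx
    · simp [ht, pullback.lift_fst, pullback.lift_snd]
  · dsimp
    have : Mono ((pullback.lift k 0 (by simp [w]) : K ⟶ pullback g r) ≫ pullback.fst g r) := by
      simpa [pullback.lift_fst, pullback.lift_snd]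
    exact mono_of_mono _ (pullback.fst g r)
  · dsimp; infer_instance

lemma PI_ext {n : ℕ} {K Z' Z : A} (k : K ⟶ Z') (g : Z' ⟶ Z) (w : k ≫ g = 0)
    (h : (ShortComplex.mk k g w).ShortExact) (hK : K ∈ YSet T) (hZ : Z ∈ PI (YSet T) n) :
    Z' ∈ PI (YSet T) n := by
  have := h.epi_g
  dsimp at this
  cases n with
  | zero =>
    obtain ⟨Y, hY, r, hr⟩ := hZ
    exact ⟨pullback r g, Y_ext T (pb_ses k g w h r) hK hY, pullback.snd r g, inferInstance⟩
  | succ n =>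
    obtain ⟨Y, hY, V, hV, i, r, w', h'⟩ := hZ
    exact ⟨pullback r g, Y_ext T (pb_ses k g w h r) hK hY, V, hV, _, _, _, pb_ses' i r w' h' g⟩

lemma PI_Y_sub (hcov : ∀ Y ∈ YSet T, ∃ X ∈ sumT T, ∃ K ∈ YSet T,
      ∃ (i : K ⟶ X) (p : X ⟶ Y) (w : i ≫ p = 0), (ShortComplex.mk i p w).ShortExact)
    (n : ℕ) : ∀ X ∈ PI (YSet T) n, X ∈ PI (sumT T) n := by
  induction n with
  | zero =>
    rintro X ⟨Y, hY, p, hp⟩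
    obtain ⟨X', hX', K, hK, i, q, w, h⟩ := hcov Y hY
    have := h.epi_g
    dsimp at this
    exact ⟨X', hX', q ≫ p, epi_comp _ _⟩
  | succ n ih =>
    rintro X ⟨Y, hY, Z, hZ, j, p, wp, hp⟩
    obtain ⟨X', hX', K, hK, i, q, w, h⟩ := hcov Y hY
    have := h.epi_g
    have := hp.epi_g
    have := hp.mono_f
    dsimp at *
    refine ⟨X', hX', pullback j q, ih _ (PI_ext T _ _ _ (pb_ses i q w h j) hK hZ),
      pullback.snd j q, q ≫ p, ?_, ?_⟩
    · rw [← pullback.condition_assoc, wp, comp_zero]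
    · refine ShortComplex.ShortExact.mk' ?_ ?_ ?_
      · rw [ShortComplex.exact_iff_exact_up_to_refinements]
        intro B t ht
        dsimp at t ht
        obtain ⟨B', π, hπ, x, hx⟩ := hp.exact.exact_up_to_refinements (t ≫ q) (by simpa using ht)
        dsimp at x hx
        exact ⟨B', π, hπ, pullback.lift x (π ≫ t) (by simpa using hx.symm), by simp [pullback.lift_snd]⟩
      · dsimp; infer_instance
      · dsimp; exact epi_comp _ _

lemma coker_PI {m : ℕ} (S : ComposableArrows A m) (hS : S.Exact) (P : Set A)
    (hP : ∀ (i : ℕ) (hi : i ≤ m), S.obj' i ∈ P) (i : ℕ) (hi : i + 1 ≤ m) :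
    cokernel (S.map' i (i + 1)) ∈ PI P (i + 1) := by
  induction i with
  | zero =>
    refine ⟨S.obj' 1, hP _ _, Abelian.image (S.map' 0 1),
      ⟨S.obj' 0, hP _ _, Abelian.factorThruImage _, inferInstance⟩,
      Abelian.image.ι _, cokernel.π _, kernel.condition _, ?_⟩
    exact ShortComplex.ShortExact.mk' (ShortComplex.exact_kernel _) inferInstance inferInstance
  | succ i ih =>
    have ex := hS.exact i hi
    refine ⟨S.obj' (i + 2), hP _ _, _, ih (by omega),
      cokernel.desc _ (S.map' (i + 1) (i + 2)) (hS.zero i hi), cokernel.π _, ?_, ?_⟩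
    · rw [← cancel_epi (cokernel.π _)]
      simp
    · refine ShortComplex.ShortExact.mk' ?_ ?_ ?_
      · have e2 := ShortComplex.exact_cokernel (S.map' (i + 1) (i + 2))
        rw [ShortComplex.exact_iff_exact_up_to_refinements] at e2 ⊢
        intro B t ht
        obtain ⟨B', π, hπ, x, hx⟩ := e2 t ht
        dsimp at x hx
        exact ⟨B', π, hπ, x ≫ cokernel.π _, by simpa using hx⟩
      · exact ex.mono_cokernelDesc
      · dsimp; infer_instance

lemma exact_epi_comp {Y Z X W : A} (p : Y ⟶ Z) [Epi p] (i : Z ⟶ X) (g : X ⟶ W) (w : i ≫ g = 0)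
    (h : (ShortComplex.mk i g w).Exact) :
    (ShortComplex.mk (p ≫ i) g (by rw [Category.assoc, w, comp_zero])).Exact := by
  rw [ShortComplex.exact_iff_exact_up_to_refinements] at h ⊢
  intro B t ht
  obtain ⟨B', π, hπ, x, hx⟩ := h t ht
  obtain ⟨B'', π', hπ', y, hy⟩ := surjective_up_to_refinements_of_epi p x
  dsimp at *
  refine ⟨B'', π' ≫ π, epi_comp _ _, y, ?_⟩
  rw [Category.assoc, hx, reassoc_of% hy]

lemma exact_comp_mono {Y Z X W : A} (j : Y ⟶ Z) (p : Z ⟶ X) (i : X ⟶ W) [Mono i]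
    (w : j ≫ p = 0) (h : (ShortComplex.mk j p w).Exact) :
    (ShortComplex.mk j (p ≫ i) (by rw [← Category.assoc, w, zero_comp])).Exact := by
  rw [ShortComplex.exact_iff_exact_up_to_refinements] at h ⊢
  intro B t ht
  refine h t ?_
  dsimp at *
  rwa [← cancel_mono i, Category.assoc, zero_comp]

/-- Good partial resolutions. -/
def goodS (X : A) (n : ℕ) (S : ComposableArrows A (n + 1)) : Prop :=
  S.Exact ∧ Epi (S.map' n (n + 1)) ∧
    (∀ (i : ℕ) (hi : i ≤ n), S.obj' i (by omega) ∈ sumT T) ∧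
    Nonempty (S.obj' (n + 1) ≅ X)

lemma good_precomp {X : A} {n : ℕ} (S : ComposableArrows A (n + 1)) (hS : goodS T X n S)
    {Y : A} (hY : Y ∈ sumT T) (f : Y ⟶ S.left) (w : f ≫ S.map' 0 1 = 0)
    (hf : (ShortComplex.mk f (S.map' 0 1) w).Exact) : goodS T X (n + 1) (S.precomp f) := by
  obtain ⟨h1, h2, h3, h4⟩ := hS
  refine ⟨?_, h2, ?_, h4⟩
  · exact ComposableArrows.exact_of_δ₀ hf.exact_toComposableArrows h1
  · intro i hi
    cases i with
    | zero => exact hY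
    | succ i => exact h3 i (by omega)

lemma good_extend {X : A} (n : ℕ) : ∀ (k : ℕ) (S : ComposableArrows A (k + 1)),
    goodS T X k S → ∀ Z ∈ PI (sumT T) n, ∀ (i : Z ⟶ S.left) (w : i ≫ S.map' 0 1 = 0),
    Mono i → (ShortComplex.mk i (S.map' 0 1) w).Exact →
    X ∈ presSet T (k + n + 1) := by
  induction n with
  | zero =>
    rintro k S hS Z ⟨Y, hY, p, hp⟩ i w hi hex
    exact ⟨S.precomp (p ≫ i), good_precomp T S hS hY (p ≫ i) (by rw [Category.assoc, w, comp_zero])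
      (exact_epi_comp p i _ w hex)⟩
  | succ n ih =>
    rintro k S hS Z ⟨Y, hY, V, hV, j, p, w', h'⟩ i w hi hex
    have hj : Mono j := h'.mono_f
    have hp : Epi p := h'.epi_g
    have w2 : (p ≫ i) ≫ S.map' 0 1 = 0 := by rw [Category.assoc, w, comp_zero]
    have key := ih (k + 1) (S.precomp (p ≫ i)) (good_precomp T S hS hY (p ≫ i) w2 (exact_epi_comp p i _ w hex))
      V hV j (by
        change j ≫ p ≫ i = 0
        rw [reassoc_of% w', zero_comp]) hj (exact_comp_mono j p i w' h'.exact)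
    have e : k + (n + 1) + 1 = k + 1 + n + 1 := by omega
    rw [e]
    exact key

lemma PI_pres {X : A} (n : ℕ) (hX : X ∈ PI (sumT T) n) : X ∈ presSet T n := by
  cases n with
  | zero =>
    obtain ⟨Y, hY, p, hp⟩ := hX
    refine ⟨ComposableArrows.mk₁ p, ComposableArrows.exact₁ _, hp, ?_, ⟨Iso.refl _⟩⟩
    intro i hi
    obtain rfl : i = 0 := by omega
    exact hY
  | succ n =>
    obtain ⟨Y, hY, V, hV, j, p, w', h'⟩ := hX
    have := good_extend T (X := X) n 0 (ComposableArrows.mk₁ p)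
      ⟨ComposableArrows.exact₁ _, h'.epi_g, by
        intro i hi
        obtain rfl : i = 0 := by omega
        exact hY, ⟨Iso.refl _⟩⟩ V hV j w' h'.mono_f h'.exact
    rwa [Nat.zero_add] at this

lemma cover
    (hext : ∀ (k : ℤ), 0 < k → ∀ I : Type v,
      ∀ f : (DerivedCategory.singleFunctor A 0).obj T ⟶
        ((DerivedCategory.singleFunctor A 0).obj (∐ (fun _ : I => T)))⟦k⟧, f = 0)
    (m : ℕ) (hpres : presSet T m = YSet T) (Y : A) (hY : Y ∈ YSet T) :
    ∃ X ∈ sumT T, ∃ K ∈ YSet T,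
      ∃ (i : K ⟶ X) (p : X ⟶ Y) (w : i ≫ p = 0), (ShortComplex.mk i p w).ShortExact := by
  have hY' := hY
  rw [← hpres] at hY'
  obtain ⟨S, -, hS, hT, ⟨e⟩⟩ := hY'
  obtain ⟨I, ⟨e'⟩⟩ := hT m le_rfl
  let p : (∐ (fun _ : (T ⟶ Y) => T)) ⟶ Y := Sigma.desc (fun f => f)
  let q : (∐ (fun _ : I => T)) ⟶ Y := e'.inv ≫ S.map' m (m + 1) ≫ e.hom
  have hq : Epi q := by
    dsimp only [q]
    exact epi_comp' inferInstance (epi_comp' hS inferInstance)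
  have hp : Epi p := epi_of_epi_fac
    (f := Sigma.desc (fun i => Sigma.ι (fun _ : (T ⟶ Y) => T) (Sigma.ι (fun _ : I => T) i ≫ q)))
    (h := q) (by ext; simp [p])
  have ses : (ShortComplex.mk (kernel.ι p) p (kernel.condition p)).ShortExact :=
    ShortComplex.ShortExact.mk' (ShortComplex.exact_kernel _) inferInstance hp
  have hs : (∐ (fun _ : (T ⟶ Y) => T)) ∈ sumT T := ⟨_, ⟨Iso.refl _⟩⟩
  refine ⟨_, hs, kernel p, Y_ker T ses (sumT_sub_Y T hext hs) hY ?_, _, _, _, ses⟩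
  intro f
  exact ⟨Sigma.ι (fun _ : (T ⟶ Y) => T) f, by simp [p]⟩

/-- Let `A` be an AB3 abelian category (whose derived category has Hom sets and coproducts)
and let `T` be an object such that coproducts of copies of `T` agree in `A` and `D(A)` and
`Ext^k_A(T, T^{(I)}) = 0` for all `k > 0` and all sets `I`.  If `Pres^m(T) = Y`, where
`Y = ⋂_{k>0} Ker(Ext^k_A(T, ?))`, then `Pres^m(Y) ⊆ Y`: for every exact sequence
`Y^0 → Y^1 → ⋯ → Y^m` with all `Y^j ∈ Y`, the cokernel of the last map lies in `Y`. -/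
theorem stmt14
    (hsame : ∀ I : Type v, IsIso (Sigma.desc
      (fun i : I => (DerivedCategory.singleFunctor A 0).map
        (Sigma.ι (fun _ : I => T) i))))
    (hext : ∀ (k : ℤ), 0 < k → ∀ I : Type v,
      ∀ f : (DerivedCategory.singleFunctor A 0).obj T ⟶
        ((DerivedCategory.singleFunctor A 0).obj (∐ (fun _ : I => T)))⟦k⟧, f = 0)
    (m : ℕ) (hpres : presSet T m = YSet T) :
    ∀ S : ComposableArrows A m, S.Exact → (∀ (i : ℕ) (hi : i ≤ m), S.obj' i ∈ YSet T) →
      cokernel (S.map' (m - 1) m) ∈ YSet T := by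
  intro S hS hY
  rcases m with _ | m
  · intro k hk f
    have hz : IsZero (cokernel (S.map' (0 - 1) 0)) := by
      have : Epi (S.map' (0 - 1) 0) := by
        change Epi (S.map (𝟙 _))
        infer_instance
      exact isZero_cokernel_of_epi _
    have hz2 := (shiftFunctor (DerivedCategory A) k).map_isZero
      ((DerivedCategory.singleFunctor A 0).map_isZero hz)
    exact hz2.eq_of_tgt _ _
  · have h := coker_PI S hS (YSet T) hY m le_rfl
    have h2 := PI_pres T _ (PI_Y_sub T (cover T hext (m + 1) hpres) _ _ h)
    rw [hpres] at h2
    exact h2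
end

section
/- Let E be a ring, A an abelian (or dg) setting with a triangulated functor ?⊗^L_E T : D(E) → D(A) preserving coproducts and products, and let C• be a cochain complex of E-modules such that C^k[0] ⊗^L_E T = 0 in D(A) for every k ∈ ℤ. Then C• ⊗^L_E T = 0 in D(A). -/
open CategoryTheory CategoryTheory.Limits

universe s w v u

namespace Stmt17Aux

section homology

variable {J C : Type*} [Category* J] [Category* C] [Abelian C]

/-- projection -/
noncomputable def limToEv [HasLimitsOfShape J C] (j : J) :
    (lim : (J ⥤ C) ⥤ C) ⟶ (evaluation J C).obj j where
  app G := limit.π G j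
  naturality G G' f := by simp

noncomputable def evToColim [HasColimitsOfShape J C] (j : J) :
    (evaluation J C).obj j ⟶ (colim : (J ⥤ C) ⥤ C) where
  app G := colimit.ι G j
  naturality G G' f := by simp

noncomputable def homIso (K : J ⥤ ShortComplex C) :
    ((ShortComplex.FunctorEquivalence.inverse J C).obj K).homology ≅
      K ⋙ ShortComplex.homologyFunctor C :=
  NatIso.ofComponents (fun j =>
    (((ShortComplex.FunctorEquivalence.inverse J C).obj K).mapHomologyIso
      ((evaluation J C).obj j)).symm) (by
    intro i j f
    have := NatTrans.app_homology ((evaluation J C).map f)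
      ((ShortComplex.FunctorEquivalence.inverse J C).obj K)
    rw [evaluation_map_app] at this
    rw [this, Iso.symm_hom, Iso.symm_hom]
    change (_ ≫ ShortComplex.homologyMap (ShortComplex.mapNatTrans _ _) ≫ _) ≫ _ =
      _ ≫ ShortComplex.homologyMap (ShortComplex.mapNatTrans
        ((ShortComplex.FunctorEquivalence.inverse J C).obj K) ((evaluation J C).map f))
    exact (Category.assoc _ _ _).trans (congrArg _ ((Category.assoc _ _ _).trans
      ((congrArg _ (Iso.hom_inv_id _)).trans (Category.comp_id _)))))

lemma preservesLimit_homology [HasLimitsOfShape J C] [HasExactLimitsOfShape J C]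
    (K : J ⥤ ShortComplex C) : PreservesLimit K (ShortComplex.homologyFunctor C) := by
  refine preservesLimit_of_preserves_limit_cone (ShortComplex.isLimitLimitCone K) ?_
  let T := (ShortComplex.FunctorEquivalence.inverse J C).obj K
  refine IsLimit.ofIsoLimit ((IsLimit.postcomposeHomEquiv (homIso K) _).symm
    (limit.isLimit T.homology)) (Cone.ext (T.mapHomologyIso lim).symm ?_)
  intro j
  have := NatTrans.app_homology (limToEv (C := C) j) T
  change limit.π T.homology j ≫ (T.mapHomologyIso ((evaluation J C).obj j)).inv =
    (T.mapHomologyIso lim).inv ≫ ShortComplex.homologyMap (T.mapNatTrans (limToEv j))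
  change limit.π T.homology j = _ at this
  rw [this]
  simp

lemma preservesColimit_homology [HasColimitsOfShape J C] [HasExactColimitsOfShape J C]
    (K : J ⥤ ShortComplex C) : PreservesColimit K (ShortComplex.homologyFunctor C) := by
  refine preservesColimit_of_preserves_colimit_cocone (ShortComplex.isColimitColimitCocone K) ?_
  let T := (ShortComplex.FunctorEquivalence.inverse J C).obj K
  refine IsColimit.ofIsoColimit ((IsColimit.precomposeHomEquiv (homIso K).symm _).symm
    (colimit.isColimit T.homology)) (Cocone.ext (T.mapHomologyIso colim).symm ?_)
  intro j
  have := NatTrans.app_homology (evToColim (C := C) j) T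
  change ((T.mapHomologyIso ((evaluation J C).obj j)).hom ≫ colimit.ι T.homology j) ≫
    (T.mapHomologyIso colim).inv = ShortComplex.homologyMap (T.mapNatTrans (evToColim j))
  change colimit.ι T.homology j = _ at this
  rw [this]
  simp

variable {ι : Type*} (c : ComplexShape ι) (n : ι)

lemma preservesLimits_sc [HasLimitsOfShape J C] : PreservesLimitsOfShape J
    (HomologicalComplex.shortComplexFunctor C c n) where
  preservesLimit := ⟨fun hs => ⟨ShortComplex.isLimitOfIsLimitπ _
    (isLimitOfPreserves (HomologicalComplex.eval C c _) hs)
    (isLimitOfPreserves (HomologicalComplex.eval C c _) hs)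
    (isLimitOfPreserves (HomologicalComplex.eval C c _) hs)⟩⟩

lemma preservesColimits_sc [HasColimitsOfShape J C] : PreservesColimitsOfShape J
    (HomologicalComplex.shortComplexFunctor C c n) where
  preservesColimit := ⟨fun hs => ⟨ShortComplex.isColimitOfIsColimitπ _
    (isColimitOfPreserves (HomologicalComplex.eval C c _) hs)
    (isColimitOfPreserves (HomologicalComplex.eval C c _) hs)
    (isColimitOfPreserves (HomologicalComplex.eval C c _) hs)⟩⟩

instance preservesLimits_hom [HasLimitsOfShape J C] [HasExactLimitsOfShape J C] :
    PreservesLimitsOfShape J (HomologicalComplex.homologyFunctor C c n) := by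
  have := preservesLimits_sc (J := J) (C := C) c n
  have : PreservesLimitsOfShape J (ShortComplex.homologyFunctor C) :=
    ⟨fun {K} => preservesLimit_homology K⟩
  exact preservesLimitsOfShape_of_natIso (HomologicalComplex.homologyFunctorIso C c n).symm

instance preservesColimits_hom [HasColimitsOfShape J C] [HasExactColimitsOfShape J C] :
    PreservesColimitsOfShape J (HomologicalComplex.homologyFunctor C c n) := by
  have := preservesColimits_sc (J := J) (C := C) c n
  have : PreservesColimitsOfShape J (ShortComplex.homologyFunctor C) :=
    ⟨fun {K} => preservesColimit_homology K⟩
  exact preservesColimitsOfShape_of_natIso (HomologicalComplex.homologyFunctorIso C c n).symm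

lemma quasiIso_lim [HasLimitsOfShape J C] [HasExactLimitsOfShape J C]
    {K L : J ⥤ HomologicalComplex C c} (f : K ⟶ L) (hf : ∀ j, QuasiIso (f.app j)) :
    QuasiIso (lim.map f) := by
  rw [quasiIso_iff]
  intro n
  rw [quasiIsoAt_iff_isIso_homologyMap]
  change IsIso ((HomologicalComplex.homologyFunctor C c n).map (lim.map f))
  have e := (preservesLimitNatIso (J := J) (HomologicalComplex.homologyFunctor C c n)).hom.naturality f
  have : IsIso (((Functor.whiskeringRight J _ _).obj
      (HomologicalComplex.homologyFunctor C c n)).map f) := by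
    rw [NatTrans.isIso_iff_isIso_app]
    intro j
    have := hf j
    change IsIso (HomologicalComplex.homologyMap (f.app j) n)
    infer_instance
  have h2 : IsIso ((lim ⋙ HomologicalComplex.homologyFunctor C c n).map f ≫
    (preservesLimitNatIso (J := J) (HomologicalComplex.homologyFunctor C c n)).hom.app L) := by
    rw [e]
    dsimp only [Functor.comp_map]
    infer_instance
  change IsIso ((lim ⋙ HomologicalComplex.homologyFunctor C c n).map f)
  exact IsIso.of_isIso_comp_right _
    ((preservesLimitNatIso (J := J) (HomologicalComplex.homologyFunctor C c n)).hom.app L)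

lemma quasiIso_colim [HasColimitsOfShape J C] [HasExactColimitsOfShape J C]
    {K L : J ⥤ HomologicalComplex C c} (f : K ⟶ L) (hf : ∀ j, QuasiIso (f.app j)) :
    QuasiIso (colim.map f) := by
  rw [quasiIso_iff]
  intro n
  rw [quasiIsoAt_iff_isIso_homologyMap]
  change IsIso ((HomologicalComplex.homologyFunctor C c n).map (colim.map f))
  have e := (preservesColimitNatIso (J := J)
    (HomologicalComplex.homologyFunctor C c n)).hom.naturality f
  have : IsIso (((Functor.whiskeringRight J _ _).obj
      (HomologicalComplex.homologyFunctor C c n)).map f) := by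
    rw [NatTrans.isIso_iff_isIso_app]
    intro j
    have := hf j
    change IsIso (HomologicalComplex.homologyMap (f.app j) n)
    infer_instance
  have h2 : IsIso ((colim ⋙ HomologicalComplex.homologyFunctor C c n).map f ≫
    (preservesColimitNatIso (J := J) (HomologicalComplex.homologyFunctor C c n)).hom.app L) := by
    rw [e]
    dsimp only [Functor.comp_map]
    infer_instance
  change IsIso ((colim ⋙ HomologicalComplex.homologyFunctor C c n).map f)
  exact IsIso.of_isIso_comp_right _
    ((preservesColimitNatIso (J := J) (HomologicalComplex.homologyFunctor C c n)).hom.app L)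

end homology

section derived

open DerivedCategory Pretriangulated

variable {C : Type u} [Category.{v} C] [Abelian C] [HasDerivedCategory.{w} C] {J : Type s}

section products

variable [HasLimitsOfShape (Discrete J) C] [HasExactLimitsOfShape (Discrete J) C]
  (X : J → CochainComplex C ℤ)

lemma exists_lift (Y : DerivedCategory C) (f : ∀ j, Y ⟶ Q.obj (X j)) :
    ∃ g : Y ⟶ Q.obj (∏ᶜ X), ∀ j, g ≫ Q.map (Pi.π X j) = f j := by
  let Z := Q.objPreimage Y
  let e : Q.obj Z ≅ Y := Q.objObjPreimageIso Y
  choose X' a t ht h using fun j => left_fac (e.hom ≫ f j)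
  let S : ∏ᶜ X ⟶ ∏ᶜ X' := lim.map (Discrete.natTrans (fun j => t j.as))
  have hS : QuasiIso S := quasiIso_lim _ _ (fun j => by
    have := ht j.as
    rw [isIso_Q_map_iff_quasiIso] at this
    exact this)
  have hS' : ∀ j, S ≫ Pi.π X' j = Pi.π X j ≫ t j := fun j => by
    simp [S, Pi.π]
  refine ⟨e.inv ≫ Q.map (Pi.lift a) ≫ inv (Q.map S), fun j => ?_⟩
  have h3 : inv (Q.map S) ≫ Q.map (Pi.π X j) = Q.map (Pi.π X' j) ≫ inv (Q.map (t j)) := by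
    rw [IsIso.inv_comp_eq, ← Category.assoc, IsIso.eq_comp_inv, ← Q.map_comp, ← Q.map_comp, hS']
  rw [Category.assoc, Category.assoc, h3, ← Q.map_comp_assoc, Pi.lift_π, ← h, e.inv_hom_id_assoc]

lemma lift_uniq {Y : DerivedCategory C} (f : Y ⟶ Q.obj (∏ᶜ X))
    (hf : ∀ j, f ≫ Q.map (Pi.π X j) = 0) : f = 0 := by
  obtain ⟨W, c, δ, hT⟩ := distinguished_cocone_triangle f
  choose u hu using fun j => Triangle.yoneda_exact₂ _ hT (Q.map (Pi.π X j)) (hf j)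
  obtain ⟨e, he⟩ := exists_lift X W u
  have hp : ∀ j, (c ≫ e) ≫ Q.map (Pi.π X j) = Q.map (Pi.π X j) := fun j => by
    rw [Category.assoc, he]; exact (hu j).symm
  have : IsIso (c ≫ e) := by
    rw [isIso_iff]
    intro n
    have : (DerivedCategory.homologyFunctor C n).map (c ≫ e) = 𝟙 _ := by
      rw [← cancel_mono ((homologyFunctorFactors C n).hom.app (∏ᶜ X))]
      refine (isLimitOfPreserves (HomologicalComplex.homologyFunctor C (ComplexShape.up ℤ) n)
        (limit.isLimit (Discrete.functor X))).hom_ext (fun ⟨j⟩ => ?_)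
      have e1 := (homologyFunctorFactors C n).hom.naturality (Pi.π X j)
      have e2 := (DerivedCategory.homologyFunctor C n).congr_map (hp j)
      rw [Functor.map_comp] at e2
      change (_ ≫ _) ≫ (HomologicalComplex.homologyFunctor C _ n).map (Pi.π X j) =
        (_ ≫ _) ≫ (HomologicalComplex.homologyFunctor C _ n).map (Pi.π X j)
      rw [Category.assoc, Category.assoc, ← e1, Category.id_comp]
      dsimp only [Functor.comp_map]
      rw [reassoc_of% e2]
    rw [this]
    infer_instance
  rw [← cancel_mono (c ≫ e), zero_comp, ← Category.assoc]
  have : f ≫ c = 0 := comp_distTriang_mor_zero₁₂ _ hT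
  rw [this, zero_comp]

lemma Q_isLimit : Nonempty (IsLimit (Fan.mk (Q.obj (∏ᶜ X)) (fun j => Q.map (Pi.π X j)))) := by
  choose l hl using fun (Y : DerivedCategory C) (f : ∀ j, Y ⟶ Q.obj (X j)) => exists_lift X Y f
  refine ⟨Fan.IsLimit.mk _ (fun c => l c.pt c.proj) (fun c j => hl _ _ j) (fun c m hm => ?_)⟩
  rw [← sub_eq_zero]
  refine lift_uniq X _ (fun j => ?_)
  rw [Preadditive.sub_comp, hl]
  exact sub_eq_zero.2 (hm j)

end products

section coproducts

variable [HasColimitsOfShape (Discrete J) C] [HasExactColimitsOfShape (Discrete J) C]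
  (X : J → CochainComplex C ℤ)

lemma exists_desc (Y : DerivedCategory C) (f : ∀ j, Q.obj (X j) ⟶ Y) :
    ∃ g : Q.obj (∐ X) ⟶ Y, ∀ j, Q.map (Sigma.ι X j) ≫ g = f j := by
  let Z := Q.objPreimage Y
  let e : Q.obj Z ≅ Y := Q.objObjPreimageIso Y
  choose X' t ht a h using fun j => right_fac (f j ≫ e.inv)
  let S : ∐ X' ⟶ ∐ X := colim.map (Discrete.natTrans (fun j => t j.as))
  have hS : QuasiIso S := quasiIso_colim _ _ (fun j => by
    have := ht j.as
    rw [isIso_Q_map_iff_quasiIso] at this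
    exact this)
  have hS' : ∀ j, Sigma.ι X' j ≫ S = t j ≫ Sigma.ι X j := fun j => by
    simp [S, Sigma.ι]
  refine ⟨inv (Q.map S) ≫ Q.map (Sigma.desc a) ≫ e.hom, fun j => ?_⟩
  have h3 : Q.map (Sigma.ι X j) ≫ inv (Q.map S) = inv (Q.map (t j)) ≫ Q.map (Sigma.ι X' j) := by
    rw [IsIso.eq_inv_comp, ← Category.assoc, IsIso.comp_inv_eq, ← Q.map_comp, ← Q.map_comp, hS']
  rw [reassoc_of% h3, ← Q.map_comp_assoc, Sigma.ι_desc, ← Category.assoc, ← h, Category.assoc,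
    e.inv_hom_id, Category.comp_id]

lemma desc_uniq {Y : DerivedCategory C} (f : Q.obj (∐ X) ⟶ Y)
    (hf : ∀ j, Q.map (Sigma.ι X j) ≫ f = 0) : f = 0 := by
  obtain ⟨W, c, δ, hT⟩ := distinguished_cocone_triangle₁ f
  choose u hu using fun j => Triangle.coyoneda_exact₂ _ hT (Q.map (Sigma.ι X j)) (hf j)
  obtain ⟨e, he⟩ := exists_desc X W u
  have hp : ∀ j, Q.map (Sigma.ι X j) ≫ (e ≫ c) = Q.map (Sigma.ι X j) := fun j => by
    rw [← Category.assoc, he]; exact (hu j).symm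
  have : IsIso (e ≫ c) := by
    rw [isIso_iff]
    intro n
    have : (DerivedCategory.homologyFunctor C n).map (e ≫ c) = 𝟙 _ := by
      rw [← cancel_epi ((homologyFunctorFactors C n).inv.app (∐ X))]
      refine (isColimitOfPreserves (HomologicalComplex.homologyFunctor C (ComplexShape.up ℤ) n)
        (colimit.isColimit (Discrete.functor X))).hom_ext (fun ⟨j⟩ => ?_)
      have e1 := (homologyFunctorFactors C n).inv.naturality (Sigma.ι X j)
      have e2 := (DerivedCategory.homologyFunctor C n).congr_map (hp j)
      rw [Functor.map_comp] at e2
      change (HomologicalComplex.homologyFunctor C _ n).map (Sigma.ι X j) ≫ (_ ≫ _) =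
        (HomologicalComplex.homologyFunctor C _ n).map (Sigma.ι X j) ≫ (_ ≫ _)
      rw [reassoc_of% e1, reassoc_of% e1, Category.comp_id]
      rw [e2]
    rw [this]
    infer_instance
  rw [← cancel_epi (e ≫ c), comp_zero, Category.assoc]
  have : c ≫ f = 0 := comp_distTriang_mor_zero₁₂ _ hT
  rw [this, comp_zero]

lemma Q_isColimit :
    Nonempty (IsColimit (Cofan.mk (Q.obj (∐ X)) (fun j => Q.map (Sigma.ι X j)))) := by
  choose l hl using fun (Y : DerivedCategory C) (f : ∀ j, Q.obj (X j) ⟶ Y) => exists_desc X Y f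
  refine ⟨Cofan.IsColimit.mk _ (fun c => l c.pt c.inj) (fun c j => hl _ _ j) (fun c m hm => ?_)⟩
  rw [← sub_eq_zero]
  refine desc_uniq X _ (fun j => ?_)
  rw [Preadditive.comp_sub, hl]
  exact sub_eq_zero.2 (hm j)

end coproducts

end derived

section swindle

variable {C : Type*} [Category* C] [Preadditive C]

lemma isIso_of_eventually_zero_prod {Y : ℕ → C} (a : ∀ n, Y (n + 1) ⟶ Y n)
    {P : Fan Y} (hP : IsLimit P) (θ : P.pt ⟶ P.pt)
    (hθ : ∀ n, θ ≫ P.proj n = P.proj n - P.proj (n + 1) ≫ a n)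
    (N : ℕ) (hN : ∀ n, N ≤ n → IsZero (Y n)) : IsIso θ := by
  let t : ℕ → ∀ n, P.pt ⟶ Y n := fun r => Nat.rec (fun _ => 0)
    (fun _ ih n => P.proj n + ih (n + 1) ≫ a n) r
  have t_succ : ∀ r n, t (r + 1) n = P.proj n + t r (n + 1) ≫ a n := fun _ _ => rfl
  have ht : ∀ r n, N ≤ n + r → t r n = t (r + 1) n := by
    intro r
    induction r with
    | zero => intro n hn; exact (hN n hn).eq_of_tgt _ _
    | succ r ih =>
      intro n hn
      rw [t_succ r n, t_succ (r + 1) n, ih (n + 1) (by omega)]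
  let ψ : P.pt ⟶ P.pt := Fan.IsLimit.lift hP (fun n => t N n)
  have hψ : ∀ n, ψ ≫ P.proj n = t N n := fun n => Fan.IsLimit.fac hP _ n
  have h1 : ψ ≫ θ = 𝟙 _ := by
    refine Fan.IsLimit.hom_ext hP _ _ (fun n => ?_)
    rw [Category.assoc, hθ, Preadditive.comp_sub, hψ, ← Category.assoc, hψ,
      ht N n (by omega), t_succ, add_sub_cancel_right, Category.id_comp]
  have h2 : ∀ f : P.pt ⟶ P.pt, f ≫ θ = 0 → f = 0 := by
    intro f hf
    have h3 : ∀ n, f ≫ P.proj n = (f ≫ P.proj (n + 1)) ≫ a n := fun n => by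
      rw [← sub_eq_zero, Category.assoc, ← Preadditive.comp_sub, ← hθ, ← Category.assoc, hf,
        zero_comp]
    have h4 : ∀ r n, N ≤ n + r → f ≫ P.proj n = 0 := by
      intro r
      induction r with
      | zero => intro n hn; exact (hN n hn).eq_of_tgt _ _
      | succ r ih => intro n hn; rw [h3, ih (n + 1) (by omega), zero_comp]
    refine Fan.IsLimit.hom_ext hP _ _ (fun n => ?_)
    rw [h4 N n (by omega), zero_comp]
  refine ⟨ψ, ?_, h1⟩
  rw [← sub_eq_zero]
  apply h2
  rw [Preadditive.sub_comp, Category.assoc, h1, Category.comp_id, Category.id_comp, sub_self]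

lemma isIso_of_eventually_zero_coprod {Y : ℕ → C} (a : ∀ n, Y n ⟶ Y (n + 1))
    {P : Cofan Y} (hP : IsColimit P) (θ : P.pt ⟶ P.pt)
    (hθ : ∀ n, P.inj n ≫ θ = P.inj n - a n ≫ P.inj (n + 1))
    (N : ℕ) (hN : ∀ n, N ≤ n → IsZero (Y n)) : IsIso θ := by
  let t : ℕ → ∀ n, Y n ⟶ P.pt := fun r => Nat.rec (fun _ => 0)
    (fun _ ih n => P.inj n + a n ≫ ih (n + 1)) r
  have t_succ : ∀ r n, t (r + 1) n = P.inj n + a n ≫ t r (n + 1) := fun _ _ => rfl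
  have ht : ∀ r n, N ≤ n + r → t r n = t (r + 1) n := by
    intro r
    induction r with
    | zero => intro n hn; exact (hN n hn).eq_of_src _ _
    | succ r ih =>
      intro n hn
      rw [t_succ r n, t_succ (r + 1) n, ih (n + 1) (by omega)]
  let ψ : P.pt ⟶ P.pt := Cofan.IsColimit.desc hP (fun n => t N n)
  have hψ : ∀ n, P.inj n ≫ ψ = t N n := fun n => Cofan.IsColimit.fac hP _ n
  have h1 : θ ≫ ψ = 𝟙 _ := by
    refine Cofan.IsColimit.hom_ext hP _ _ (fun n => ?_)
    rw [← Category.assoc, hθ, Preadditive.sub_comp, hψ, Category.assoc, hψ,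
      ht N n (by omega), t_succ, add_sub_cancel_right, Category.comp_id]
  have h2 : ∀ f : P.pt ⟶ P.pt, θ ≫ f = 0 → f = 0 := by
    intro f hf
    have h3 : ∀ n, P.inj n ≫ f = a n ≫ (P.inj (n + 1) ≫ f) := fun n => by
      rw [← sub_eq_zero, ← Category.assoc, ← Preadditive.sub_comp, ← hθ, Category.assoc, hf,
        comp_zero]
    have h4 : ∀ r n, N ≤ n + r → P.inj n ≫ f = 0 := by
      intro r
      induction r with
      | zero => intro n hn; exact (hN n hn).eq_of_src _ _
      | succ r ih => intro n hn; rw [h3, ih (n + 1) (by omega), comp_zero]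
    refine Cofan.IsColimit.hom_ext hP _ _ (fun n => ?_)
    rw [h4 N n (by omega), comp_zero]
  refine ⟨ψ, h1, ?_⟩
  rw [← sub_eq_zero]
  apply h2
  rw [Preadditive.comp_sub, ← Category.assoc, h1, Category.comp_id, Category.id_comp, sub_self]

lemma isZero_of_isIso_prod {M : ℕ → C} (b : ∀ n, M (n + 1) ⟶ M n) [∀ n, IsIso (b n)]
    {P : Fan M} (hP : IsLimit P) (θ : P.pt ⟶ P.pt)
    (hθ : ∀ n, θ ≫ P.proj n = P.proj n - P.proj (n + 1) ≫ b n) [IsIso θ] : IsZero (M 0) := by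
  let c : ∀ n, M 0 ⟶ M n := fun n => Nat.rec (𝟙 _) (fun n ih => ih ≫ inv (b n)) n
  have c_succ : ∀ n, c (n + 1) = c n ≫ inv (b n) := fun _ => rfl
  let δ : M 0 ⟶ P.pt := Fan.IsLimit.lift hP c
  have hδ : ∀ n, δ ≫ P.proj n = c n := fun n => Fan.IsLimit.fac hP _ n
  have h0 : δ ≫ θ = 0 := by
    refine Fan.IsLimit.hom_ext hP _ _ (fun n => ?_)
    rw [Category.assoc, hθ, Preadditive.comp_sub, ← Category.assoc, hδ, hδ, c_succ]
    simp
  have h1 : δ = 0 := by rw [← cancel_mono θ, h0, zero_comp]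
  rw [IsZero.iff_id_eq_zero]
  have := hδ 0
  rw [h1, zero_comp] at this
  exact this.symm

lemma isZero_of_isIso_coprod {M : ℕ → C} (b : ∀ n, M n ⟶ M (n + 1)) [∀ n, IsIso (b n)]
    {P : Cofan M} (hP : IsColimit P) (θ : P.pt ⟶ P.pt)
    (hθ : ∀ n, P.inj n ≫ θ = P.inj n - b n ≫ P.inj (n + 1)) [IsIso θ] : IsZero (M 0) := by
  let c : ∀ n, M n ⟶ M 0 := fun n => Nat.rec (𝟙 _) (fun n ih => inv (b n) ≫ ih) n
  have c_succ : ∀ n, c (n + 1) = inv (b n) ≫ c n := fun _ => rfl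
  let δ : P.pt ⟶ M 0 := Cofan.IsColimit.desc hP c
  have hδ : ∀ n, P.inj n ≫ δ = c n := fun n => Cofan.IsColimit.fac hP _ n
  have h0 : θ ≫ δ = 0 := by
    refine Cofan.IsColimit.hom_ext hP _ _ (fun n => ?_)
    rw [← Category.assoc, hθ, Preadditive.sub_comp, Category.assoc, hδ, hδ, c_succ]
    simp
  have h1 : δ = 0 := by rw [← cancel_epi θ, h0, comp_zero]
  rw [IsZero.iff_id_eq_zero]
  have := hδ 0
  rw [h1, comp_zero] at this
  exact this.symm

end swindle

section trunc

open Classical ZeroObject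

variable {C : Type*} [Category* C] [Abelian C]

noncomputable def tObj (I : Prop) (X : C) : C := if I then X else 0

noncomputable def tE (I : Prop) (X : C) : tObj I X ⟶ X :=
  if h : I then eqToHom (by simp [tObj, h]) else 0

noncomputable def tR (I : Prop) (X : C) : X ⟶ tObj I X :=
  if h : I then eqToHom (by simp [tObj, h]) else 0

lemma isZero_tObj (I : Prop) (X : C) (h : ¬ I) : IsZero (tObj I X) := by
  simp only [tObj, h, if_false]; exact isZero_zero C

lemma tE_tR (I : Prop) (X : C) : tE I X ≫ tR I X = 𝟙 _ := by
  by_cases h : I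
  · simp [tE, tR, h]
  · exact (isZero_tObj I X h).eq_of_src _ _

lemma tR_tE (I : Prop) (X : C) (h : I) : tR I X ≫ tE I X = 𝟙 _ := by
  simp [tE, tR, h]

lemma tR_tE_assoc (I : Prop) (X : C) (h : I) {Z : C} (f : X ⟶ Z) :
    tR I X ≫ tE I X ≫ f = f := by
  rw [← Category.assoc, tR_tE I X h, Category.id_comp]

lemma tE_zero (I : Prop) (X : C) (h : ¬ I) : tE I X = 0 := (isZero_tObj I X h).eq_of_src _ _
lemma tR_zero (I : Prop) (X : C) (h : ¬ I) : tR I X = 0 := (isZero_tObj I X h).eq_of_tgt _ _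

noncomputable def T (I : ℤ → Prop) (K : CochainComplex C ℤ) : CochainComplex C ℤ where
  X k := tObj (I k) (K.X k)
  d i j := tE _ _ ≫ K.d i j ≫ tR _ _
  shape i j h := by rw [K.shape i j h]; simp
  d_comp_d' i j k _ _ := by
    by_cases h : I j
    · simp [tR_tE_assoc _ _ h]
    · simp [tR_zero _ _ h]

noncomputable def Tmap (I J : ℤ → Prop) (K : CochainComplex C ℤ)
    (h : ∀ k, I k → J (k + 1) → (J k ↔ I (k + 1))) : T I K ⟶ T J K where
  f k := tE _ _ ≫ tR _ _
  comm' i j hij := by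
    obtain rfl : i + 1 = j := hij
    dsimp [T]
    by_cases h1 : I i
    · by_cases h2 : J (i + 1)
      · by_cases h3 : J i
        · simp [tR_tE_assoc _ _ h3, tR_tE_assoc _ _ ((h _ h1 h2).1 h3)]
        · have h4 : ¬ I (i + 1) := fun h4 => h3 ((h _ h1 h2).2 h4)
          simp [tR_zero _ _ h3, tR_zero _ _ h4]
      · simp [tR_zero _ _ h2]
    · simp [tE_zero _ _ h1]

noncomputable def Tuniv (I : ℤ → Prop) (hI : ∀ k, I k) (K : CochainComplex C ℤ) : T I K ≅ K :=
  HomologicalComplex.Hom.isoOfComponents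
    (fun k => ⟨tE _ _, tR _ _, tE_tR _ _, tR_tE _ _ (hI k)⟩) (by
      intro i j _
      dsimp [T]
      simp [tR_tE _ _ (hI j)])

lemma T_shortExact (I J L : ℤ → Prop) (K : CochainComplex C ℤ)
    (h : ∀ k, I k → J (k + 1) → (J k ↔ I (k + 1)))
    (h' : ∀ k, J k → L (k + 1) → (L k ↔ J (k + 1)))
    (hJ : ∀ k, J k ↔ (I k ∨ L k)) (hIL : ∀ k, I k → ¬ L k) :
    ∃ w, (ShortComplex.mk (Tmap I J K h) (Tmap J L K h') w).ShortExact := by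
  have w0 : ∀ k, (tE (I k) (K.X k) ≫ tR (J k) (K.X k)) ≫ tE (J k) (K.X k) ≫ tR (L k) (K.X k)
      = 0 := by
    intro k
    by_cases h1 : I k
    · simp [tR_zero _ _ (hIL k h1)]
    · simp [tE_zero _ _ h1]
  have w : Tmap I J K h ≫ Tmap J L K h' = 0 := by
    ext k
    exact w0 k
  refine ⟨w, HomologicalComplex.shortExact_of_degreewise_shortExact _ (fun k => ?_)⟩
  refine ShortComplex.Splitting.shortExact ?_
  exact
    { r := tE (J k) (K.X k) ≫ tR (I k) (K.X k)
      s := tE (L k) (K.X k) ≫ tR (J k) (K.X k)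
      f_r := by
        change (tE (I k) (K.X k) ≫ tR (J k) (K.X k)) ≫ tE (J k) (K.X k) ≫ tR (I k) (K.X k) = 𝟙 _
        by_cases h1 : I k
        · simp [tR_tE_assoc _ _ ((hJ k).2 (Or.inl h1)), tE_tR]
        · exact (isZero_tObj _ _ h1).eq_of_src _ _
      s_g := by
        change (tE (L k) (K.X k) ≫ tR (J k) (K.X k)) ≫ tE (J k) (K.X k) ≫ tR (L k) (K.X k) = 𝟙 _
        by_cases h1 : L k
        · simp [tR_tE_assoc _ _ ((hJ k).2 (Or.inr h1)), tE_tR]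
        · exact (isZero_tObj _ _ h1).eq_of_src _ _
      id := by
        change (tE (J k) (K.X k) ≫ tR (I k) (K.X k)) ≫ tE (I k) (K.X k) ≫ tR (J k) (K.X k) +
          (tE (J k) (K.X k) ≫ tR (L k) (K.X k)) ≫ tE (L k) (K.X k) ≫ tR (J k) (K.X k) = 𝟙 _
        by_cases h1 : I k
        · simp [tR_tE_assoc _ _ h1, tR_zero _ _ (hIL k h1), tE_tR]
        · by_cases h2 : L k
          · simp [tR_tE_assoc _ _ h2, tR_zero _ _ h1, tE_tR]
          · have h3 : ¬ J k := by rw [hJ]; tauto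
            exact (isZero_tObj _ _ h3).eq_of_src _ _ }

lemma Tsingle (I : ℤ → Prop) (n : ℤ) (hI : ∀ k, I k ↔ k = n)
    (K : CochainComplex C ℤ) :
    ∃ M : C, Nonempty (M ≅ K.X n) ∧
      Nonempty (T I K ≅ (HomologicalComplex.single C (ComplexShape.up ℤ) n).obj M) := by
  have h1 : (T I K).IsStrictlyGE n := by
    rw [CochainComplex.isStrictlyGE_iff]
    intro i hi
    exact isZero_tObj _ _ (fun h => by rw [hI] at h; omega)
  have h2 : (T I K).IsStrictlyLE n := by
    rw [CochainComplex.isStrictlyLE_iff]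
    intro i hi
    exact isZero_tObj _ _ (fun h => by rw [hI] at h; omega)
  obtain ⟨M, ⟨e⟩⟩ := CochainComplex.exists_iso_single (T I K) n
  refine ⟨M, ⟨?_⟩, ⟨e⟩⟩
  exact (HomologicalComplex.singleObjXSelf (ComplexShape.up ℤ) n M).symm ≪≫
    (HomologicalComplex.eval C (ComplexShape.up ℤ) n).mapIso e.symm ≪≫
    ⟨tE _ _, tR _ _, tE_tR _ _, tR_tE _ _ ((hI n).2 rfl)⟩

end trunc

section main

open DerivedCategory Pretriangulated

variable {C : Type u} [Category.{v} C] [Abelian C] [HasDerivedCategory.{w} C]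
  {D : Type*} [Category* D] [Preadditive D] [HasZeroObject D] [HasShift D ℤ]
  [∀ n : ℤ, (CategoryTheory.shiftFunctor D n).Additive] [Pretriangulated D]
  (F : DerivedCategory C ⥤ D) [F.CommShift ℤ] [F.IsTriangulated]

lemma isIso_of_ses₁ {S : ShortComplex (CochainComplex C ℤ)} (hS : S.ShortExact)
    (h : IsZero (F.obj (Q.obj S.X₃))) : IsIso (F.map (Q.map S.f)) :=
  (Triangle.isZero₃_iff_isIso₁ _
    (F.map_distinguished _ (triangleOfSES_distinguished hS))).1 h

lemma isIso_of_ses₂ {S : ShortComplex (CochainComplex C ℤ)} (hS : S.ShortExact)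
    (h : IsZero (F.obj (Q.obj S.X₁))) : IsIso (F.map (Q.map S.g)) :=
  (Triangle.isZero₁_iff_isIso₂ _
    (F.map_distinguished _ (triangleOfSES_distinguished hS))).1 h

lemma isZero_of_ses {S : ShortComplex (CochainComplex C ℤ)} (hS : S.ShortExact)
    (h1 : IsZero (F.obj (Q.obj S.X₁))) (h3 : IsZero (F.obj (Q.obj S.X₃))) :
    IsZero (F.obj (Q.obj S.X₂)) :=
  Triangle.isZero₂_of_isZero₁₃ _
    (F.map_distinguished _ (triangleOfSES_distinguished hS)) h1 h3

lemma isZero_single (K : CochainComplex C ℤ) (n : ℤ) (I : ℤ → Prop) (hI : ∀ k, I k ↔ k = n)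
    (h : IsZero (F.obj ((singleFunctor C 0).obj (K.X n)))) :
    IsZero (F.obj (Q.obj (T I K))) := by
  obtain ⟨M, ⟨e⟩, ⟨e'⟩⟩ := Tsingle I n hI K
  let i1 : Q.obj (T I K) ≅ (singleFunctor C n).obj (K.X n) :=
    Q.mapIso e' ≪≫ (singleFunctor C n).mapIso e
  let i2 : ((singleFunctor C 0).obj (K.X n))⟦(-n : ℤ)⟧ ≅ (singleFunctor C n).obj (K.X n) :=
    ((singleFunctors C).shiftIso (-n) n 0 (by simp)).app _
  refine IsZero.of_iso ?_ (F.mapIso (i1 ≪≫ i2.symm) ≪≫ (F.commShiftIso (-n)).app _)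
  exact Functor.map_isZero (shiftFunctor D (-n)) h

section prod

variable [HasLimitsOfShape (Discrete ℕ) C] [HasExactLimitsOfShape (Discrete ℕ) C]
  [PreservesLimitsOfShape (Discrete ℕ) F]

lemma swindle_prod (X : ℕ → CochainComplex C ℤ) (a : ∀ n, X (n + 1) ⟶ X n)
    (hX : ∀ k : ℤ, ∃ N : ℕ, ∀ n, N ≤ n → IsZero ((X n).X k))
    (ha : ∀ n, IsIso (F.map (Q.map (a n)))) : IsZero (F.obj (Q.obj (X 0))) := by
  let θ : ∏ᶜ X ⟶ ∏ᶜ X := Pi.lift (fun n => Pi.π X n - Pi.π X (n + 1) ≫ a n)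
  have hθ : ∀ n, θ ≫ Pi.π X n = Pi.π X n - Pi.π X (n + 1) ≫ a n := fun n => Pi.lift_π _ _
  have : ∀ k, IsIso (θ.f k) := by
    intro k
    obtain ⟨N, hN⟩ := hX k
    exact isIso_of_eventually_zero_prod (Y := fun n => (X n).X k) (fun n => (a n).f k)
      (isLimitFanMkObjOfIsLimit (HomologicalComplex.eval C (ComplexShape.up ℤ) k) _ _
        (productIsProduct X)) (θ.f k) (fun n => by
          have := congrArg (fun φ => HomologicalComplex.Hom.f φ k) (hθ n)
          exact this) N hN
  have : IsIso θ := HomologicalComplex.Hom.isIso_of_components θ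
  obtain ⟨hl⟩ := Q_isLimit X
  exact isZero_of_isIso_prod (M := fun n => F.obj (Q.obj (X n))) (fun n => F.map (Q.map (a n)))
    (isLimitFanMkObjOfIsLimit F _ _ hl) (F.map (Q.map θ)) (fun n => by
      change F.map (Q.map θ) ≫ F.map (Q.map (Pi.π X n)) = F.map (Q.map (Pi.π X n)) -
        F.map (Q.map (Pi.π X (n + 1))) ≫ F.map (Q.map (a n))
      rw [← F.map_comp, ← Q.map_comp, hθ, Q.map_sub, F.map_sub, Q.map_comp, F.map_comp])

lemma isZero_ge (K : CochainComplex C ℤ)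
    (h : ∀ k, IsZero (F.obj ((singleFunctor C 0).obj (K.X k)))) (m : ℤ) :
    IsZero (F.obj (Q.obj (T (fun k => m ≤ k) K))) := by
  have key := swindle_prod F (fun n => T (fun k => m + (n : ℤ) ≤ k) K)
    (fun n => Tmap _ _ K (by intro k; push_cast; omega)) (fun k => by
      refine ⟨(k + 1 - m).toNat, fun n hn => isZero_tObj _ _ ?_⟩
      omega) (fun n => by
      obtain ⟨_, hs⟩ := T_shortExact (fun k => m + ((n + 1 : ℕ) : ℤ) ≤ k)
        (fun k => m + (n : ℤ) ≤ k) (fun k => k = m + n) K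
        (by intro k; push_cast; omega) (by intro k; push_cast; omega)
        (by intro k; push_cast; omega) (by intro k; push_cast; omega)
      exact isIso_of_ses₁ F hs (isZero_single F K (m + n) _ (fun _ => Iff.rfl) (h _)))
  simpa using key

end prod

section coprod

variable [HasColimitsOfShape (Discrete ℕ) C] [HasExactColimitsOfShape (Discrete ℕ) C]
  [PreservesColimitsOfShape (Discrete ℕ) F]

lemma swindle_coprod (X : ℕ → CochainComplex C ℤ) (a : ∀ n, X n ⟶ X (n + 1))
    (hX : ∀ k : ℤ, ∃ N : ℕ, ∀ n, N ≤ n → IsZero ((X n).X k))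
    (ha : ∀ n, IsIso (F.map (Q.map (a n)))) : IsZero (F.obj (Q.obj (X 0))) := by
  let θ : ∐ X ⟶ ∐ X := Sigma.desc (fun n => Sigma.ι X n - a n ≫ Sigma.ι X (n + 1))
  have hθ : ∀ n, Sigma.ι X n ≫ θ = Sigma.ι X n - a n ≫ Sigma.ι X (n + 1) :=
    fun n => Sigma.ι_desc _ _
  have : ∀ k, IsIso (θ.f k) := by
    intro k
    obtain ⟨N, hN⟩ := hX k
    exact isIso_of_eventually_zero_coprod (Y := fun n => (X n).X k) (fun n => (a n).f k)
      (isColimitCofanMkObjOfIsColimit (HomologicalComplex.eval C (ComplexShape.up ℤ) k) _ _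
        (coproductIsCoproduct X)) (θ.f k) (fun n => by
          have := congrArg (fun φ => HomologicalComplex.Hom.f φ k) (hθ n)
          exact this) N hN
  have : IsIso θ := HomologicalComplex.Hom.isIso_of_components θ
  obtain ⟨hl⟩ := Q_isColimit X
  exact isZero_of_isIso_coprod (M := fun n => F.obj (Q.obj (X n))) (fun n => F.map (Q.map (a n)))
    (isColimitCofanMkObjOfIsColimit F _ _ hl) (F.map (Q.map θ)) (fun n => by
      change F.map (Q.map (Sigma.ι X n)) ≫ F.map (Q.map θ) = F.map (Q.map (Sigma.ι X n)) -
        F.map (Q.map (a n)) ≫ F.map (Q.map (Sigma.ι X (n + 1)))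
      rw [← F.map_comp, ← Q.map_comp, hθ, Q.map_sub, F.map_sub, Q.map_comp, F.map_comp])

lemma isZero_lt (K : CochainComplex C ℤ)
    (h : ∀ k, IsZero (F.obj ((singleFunctor C 0).obj (K.X k)))) (m : ℤ) :
    IsZero (F.obj (Q.obj (T (fun k => k < m) K))) := by
  have key := swindle_coprod F (fun n => T (fun k => k < m - (n : ℤ)) K)
    (fun n => Tmap _ _ K (by intro k; push_cast; omega)) (fun k => by
      refine ⟨(m - k).toNat, fun n hn => isZero_tObj _ _ ?_⟩
      omega) (fun n => by
      obtain ⟨_, hs⟩ := T_shortExact (fun k => k = m - n - 1) (fun k => k < m - (n : ℤ))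
        (fun k => k < m - ((n + 1 : ℕ) : ℤ)) K
        (by intro k; push_cast; omega) (by intro k; push_cast; omega)
        (by intro k; push_cast; omega) (by intro k; push_cast; omega)
      exact isIso_of_ses₂ F hs (isZero_single F K (m - n - 1) _ (fun _ => Iff.rfl) (h _)))
  simpa using key

end coprod

end main

end Stmt17Aux

/-- Let `E` be a ring and let `? ⊗^L_E T : D(E) ⟶ D` be a triangulated functor to a
triangulated category with products and coproducts, preserving coproducts and products
(e.g. because it is both a left and a right adjoint).  If `C•` is a cochain complex of
`E`-modules with `C^k[0] ⊗^L_E T = 0` for every `k ∈ ℤ`, then `C• ⊗^L_E T = 0`. -/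
theorem stmt17 {E : Type u} [Ring E] [HasDerivedCategory.{w} (ModuleCat.{u} E)]
    {D : Type*} [Category.{v} D] [Preadditive D] [HasZeroObject D] [HasShift D ℤ]
    [∀ n : ℤ, (CategoryTheory.shiftFunctor D n).Additive] [Pretriangulated D]
    [HasProducts.{s} D] [HasCoproducts.{s} D]
    (F : DerivedCategory (ModuleCat.{u} E) ⥤ D) [F.CommShift ℤ] [F.IsTriangulated]
    [∀ J : Type s, PreservesColimitsOfShape (Discrete J) F]
    [∀ J : Type s, PreservesLimitsOfShape (Discrete J) F]
    (Cc : CochainComplex (ModuleCat.{u} E) ℤ)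
    (h : ∀ k : ℤ, IsZero (F.obj
      ((DerivedCategory.singleFunctor (ModuleCat.{u} E) 0).obj (Cc.X k)))) :
    IsZero (F.obj (DerivedCategory.Q.obj Cc)) := by
  have : PreservesColimitsOfShape (Discrete ℕ) F :=
    preservesColimitsOfShape_of_equiv (Discrete.equivalence (Equiv.ulift.{s} (α := ℕ))) F
  have : PreservesLimitsOfShape (Discrete ℕ) F :=
    preservesLimitsOfShape_of_equiv (Discrete.equivalence (Equiv.ulift.{s} (α := ℕ))) F
  have : HasExactLimitsOfShape (Discrete ℕ) (ModuleCat.{u} E) :=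
    have := AB4StarOfSize_shrink.{0, u} (ModuleCat.{u} E)
    inferInstance
  have : HasExactColimitsOfShape (Discrete ℕ) (ModuleCat.{u} E) :=
    have := AB4OfSize_shrink.{0, u} (ModuleCat.{u} E)
    inferInstance
  obtain ⟨_, hs⟩ := Stmt17Aux.T_shortExact (fun k => 0 ≤ k) (fun _ => True) (fun k => k < 0) Cc
    (by intro k; simp; omega) (by intro k; simp; omega) (by intro k; simp; omega)
    (by intro k; simp)
  exact (Stmt17Aux.isZero_of_ses F hs (Stmt17Aux.isZero_ge F Cc h 0)
    (Stmt17Aux.isZero_lt F Cc h 0)).of_iso (F.mapIso (DerivedCategory.Q.mapIso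
      (Stmt17Aux.Tuniv (fun _ => True) (fun _ => trivial) Cc).symm))
end

section
/- Let G be a Grothendieck category of global dimension at most d < ∞ and let (T_n)_{n∈ℤ} be a sequence of objects of G. Then (T_n)_{n∈ℤ} is a superexceptional sequence (i.e. Ext^k_G(T_n, T_p^{(I)}) = 0 for all p, n ∈ ℤ, all sets I, and all natural numbers k > p - n) if and only if the set T = {T_n[n] : n ∈ ℤ} is strongly nonpositive in D(G), i.e. Hom_{D(G)}(X, Y[k]) = 0 for all k > 0 whenever X and Y are coproducts of objects of T. -/
open CategoryTheory CategoryTheory.Limits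

universe w v u

variable {G : Type u} [Category.{v} G] [Abelian G] [HasColimits G]
  [HasDerivedCategory.{w} G] (T : ℤ → G)

/-- `Sum({T_n[n] : n ∈ ℤ})`: the objects of `D(G)` isomorphic to a set-indexed coproduct of
shifted stalk complexes `T_n[n]`. -/
def sumShiftSet [HasCoproducts.{v} (DerivedCategory G)] : Set (DerivedCategory G) :=
  {Z | ∃ (I : Type v) (g : I → ℤ), Nonempty (Z ≅
    ∐ (fun i => ((DerivedCategory.singleFunctor G 0).obj (T (g i)))⟦g i⟧))}

open scoped ZeroObject
namespace S18
section trunc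
variable {G : Type u} [Category.{v} G] [Abelian G]
variable (K : CochainComplex G ℤ) (m : ℤ)

open scoped Classical in
noncomputable def bS (i : ℤ) : Σ' (Y : G), PProd (Y ⟶ K.X i) (K.X i ⟶ Y) :=
  if m ≤ i then ⟨K.X i, 𝟙 _, 𝟙 _⟩ else ⟨0, 0, 0⟩

noncomputable def bX (i : ℤ) : G := (bS K m i).1
noncomputable def bq (i : ℤ) : bX K m i ⟶ K.X i := (bS K m i).2.1
noncomputable def bp (i : ℤ) : K.X i ⟶ bX K m i := (bS K m i).2.2

lemma bqp (i : ℤ) : bq K m i ≫ bp K m i = 𝟙 _ := by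
  unfold bq bp bX
  by_cases h : m ≤ i
  · rw [show bS K m i = ⟨K.X i, 𝟙 _, 𝟙 _⟩ from if_pos h]; simp
  · rw [show bS K m i = ⟨0, 0, 0⟩ from if_neg h]
    exact (isZero_zero G).eq_of_src _ _

lemma bpq (i : ℤ) (h : m ≤ i) : bp K m i ≫ bq K m i = 𝟙 _ := by
  unfold bq bp bX
  rw [show bS K m i = ⟨K.X i, 𝟙 _, 𝟙 _⟩ from if_pos h]; simp

lemma bz (i : ℤ) (h : i < m) : IsZero (bX K m i) := by
  unfold bX
  rw [bS, if_neg (by omega)]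
  exact isZero_zero G

noncomputable def bC : CochainComplex G ℤ where
  X := bX K m
  d i j := bq K m i ≫ K.d i j ≫ bp K m j
  shape i j h := by rw [K.shape i j h]; simp
  d_comp_d' i j k _ _ := by
    by_cases h : m ≤ j
    · have := bpq K m j h
      simp [reassoc_of% this]
    · rw [(bz K m j (by omega)).eq_of_src (bq K m j) 0]; simp

noncomputable def bι : bC K m ⟶ K where
  f i := bq K m i
  comm' i j hij := by
    simp only [ComplexShape.up_Rel] at hij
    by_cases h : m ≤ j
    · simp [bC, bpq K m j h]
    · rw [(bz K m i (by omega)).eq_of_src (bq K m i) 0]; simp [bC,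
       (bz K m i (by omega)).eq_of_src (bq K m i) 0]

lemma bι_isIso (i : ℤ) (h : m ≤ i) : IsIso ((bι K m).f i) :=
  ⟨bp K m i, bqp K m i, bpq K m i h⟩

instance : (bC K m).IsGE m := by
  have : (bC K m).IsStrictlyGE m := by
    rw [CochainComplex.isStrictlyGE_iff]
    exact fun i hi => bz K m i hi
  infer_instance

instance [K.IsLE m] : (bC K m).IsLE m := by
  rw [CochainComplex.isLE_iff]
  intro i hi
  have : QuasiIsoAt (bι K m) i := by
    rw [quasiIsoAt_iff' _ (i-1) i (i+1) (by simp) (by simp)]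
    have i1 := bι_isIso K m (i-1) (by omega)
    have i2 := bι_isIso K m (i) (by omega)
    have i3 := bι_isIso K m (i+1) (by omega)
    have h1 : Epi ((HomologicalComplex.shortComplexFunctor' G (.up ℤ) (i-1) i (i+1)).map (bι K m)).τ₁ := by
      change Epi ((bι K m).f (i-1)); infer_instance
    have h2 : IsIso ((HomologicalComplex.shortComplexFunctor' G (.up ℤ) (i-1) i (i+1)).map (bι K m)).τ₂ := i2
    have h3 : Mono ((HomologicalComplex.shortComplexFunctor' G (.up ℤ) (i-1) i (i+1)).map (bι K m)).τ₃ := by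
      change Mono ((bι K m).f (i+1)); infer_instance
    exact ShortComplex.quasiIso_of_epi_of_isIso_of_mono _
  rw [exactAt_iff_of_quasiIsoAt (bι K m)]
  exact K.exactAt_of_isLE m i hi

lemma blift (hm : m ≤ 0) (X : G)
    (x : (HomologicalComplex.single G (.up ℤ) 0).obj X ⟶ K) :
    ∃ l : (HomologicalComplex.single G (.up ℤ) 0).obj X ⟶ bC K m, l ≫ bι K m = x := by
  refine ⟨{ f := fun i => x.f i ≫ bp K m i, comm' := ?_ }, ?_⟩
  · intro i j hij
    by_cases h : m ≤ i
    · have := bpq K m i h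
      simp [bC, reassoc_of% this]
    · exact (HomologicalComplex.isZero_single_obj_X _ _ _ _ (by omega)).eq_of_src _ _
  · refine HomologicalComplex.hom_ext _ _ fun i => ?_
    by_cases h : m ≤ i
    · exact (Category.assoc _ _ _).trans ((congrArg (x.f i ≫ ·) (bpq K m i h)).trans
        (Category.comp_id _))
    · exact (HomologicalComplex.isZero_single_obj_X _ _ _ _ (by omega)).eq_of_src _ _

variable [HasDerivedCategory.{w} G]
open DerivedCategory

lemma hom_zero_of_isLE (d : ℕ)
    (hgldim : ∀ (k : ℤ), (d : ℤ) < k → ∀ M N : G,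
      ∀ f : (DerivedCategory.singleFunctor G 0).obj M ⟶
        ((DerivedCategory.singleFunctor G 0).obj N)⟦k⟧, f = 0)
    (X : G) (Z : DerivedCategory G) [hZ : Z.IsLE (-d-1)]
    (f : (DerivedCategory.singleFunctor G 0).obj X ⟶ Z) : f = 0 := by
  obtain ⟨K, _, ⟨e⟩⟩ := exists_iso_Q_obj_of_isLE Z (-d-1)
  rw [← cancel_mono e.hom, zero_comp]
  obtain ⟨K', g, s, hs, fac⟩ := left_fac
    (X := (HomologicalComplex.single G (.up ℤ) 0).obj X) (f ≫ e.hom)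
  refine fac.trans ?_
  have : K'.IsLE (-d-1) := by
    rw [← isLE_Q_obj_iff]
    exact TStructure.t.isLE_of_iso (asIso (Q.map s)) _
  obtain ⟨l, rfl⟩ := blift K' (-d-1) (by omega) X g
  obtain ⟨N, ⟨e'⟩⟩ := exists_iso_singleFunctor_obj_of_isGE_of_isLE (Q.obj (bC K' (-d-1))) (-d-1)
  let e'' : (singleFunctor G (-d-1)).obj N ≅ ((singleFunctor G 0).obj N)⟦(d+1 : ℤ)⟧ :=
    (((singleFunctors G).shiftIso (d+1) (-d-1) 0 (by omega)).app N).symm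
  have := hgldim (d+1) (by omega) X N (Q.map l ≫ e'.hom ≫ e''.hom)
  have h2 : Q.map l = 0 := by
    refine (cancel_mono (e' ≪≫ e'').hom).1 (Eq.trans ?_ zero_comp.symm)
    exact this
  rw [Q.map_comp, h2, Category.assoc]
  exact zero_comp
end trunc
end S18

namespace S18
section copr
variable {G : Type u} [Category.{v} G] [Abelian G] {I : Type v}

noncomputable def famC (K : I → CochainComplex G ℤ) : CochainComplex (Discrete I ⥤ G) ℤ where
  X n := Discrete.functor fun i => (K i).X n
  d n m := Discrete.natTrans fun i => (K i.as).d n m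
  shape n m h := by ext ⟨i⟩; exact (K i).shape n m h
  d_comp_d' a b c _ _ := by ext ⟨i⟩; exact (K i).d_comp_d a b c

noncomputable def famM {K L : I → CochainComplex G ℤ} (s : ∀ i, K i ⟶ L i) : famC K ⟶ famC L where
  f n := Discrete.natTrans fun i => (s i.as).f n
  comm' a b _ := by ext ⟨i⟩; exact (s i).comm a b

lemma famM_quasiIso {K L : I → CochainComplex G ℤ} (s : ∀ i, K i ⟶ L i) [∀ i, QuasiIso (s i)] :
    QuasiIso (famM s) := by
  rw [quasiIso_iff]
  intro n
  rw [quasiIsoAt_iff_isIso_homologyMap]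
  rw [NatTrans.isIso_iff_isIso_app]
  rintro ⟨i⟩
  let E := (evaluation (Discrete I) G).obj ⟨i⟩
  have h : QuasiIso ((E.mapHomologicalComplex _).map (famM s)) := inferInstanceAs (QuasiIso (s i))
  have h1 : QuasiIsoAt ((E.mapHomologicalComplex _).map (famM s)) n := inferInstance
  rw [quasiIsoAt_iff, ShortComplex.quasiIso_iff] at h1
  have := ShortComplex.mapHomologyIso_hom_naturality
    ((HomologicalComplex.shortComplexFunctor (Discrete I ⥤ G) (.up ℤ) n).map (famM s)) E
  change IsIso (E.map (ShortComplex.homologyMap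
     ((HomologicalComplex.shortComplexFunctor (Discrete I ⥤ G) (.up ℤ) n).map (famM s))))
  have e2 := (Iso.inv_comp_eq _).2 this
  rw [← e2]
  have h1' : IsIso (ShortComplex.homologyMap (E.mapShortComplex.map ((HomologicalComplex.shortComplexFunctor (Discrete I ⥤ G) (ComplexShape.up ℤ) n).map (famM s)))) := h1
  exact IsIso.comp_isIso' inferInstance (IsIso.comp_isIso' h1' inferInstance)

variable [HasColimits G]

noncomputable def sumC (K : I → CochainComplex G ℤ) : CochainComplex G ℤ :=
  ((colim : (Discrete I ⥤ G) ⥤ G).mapHomologicalComplex _).obj (famC K)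
noncomputable def sumM {K L : I → CochainComplex G ℤ} (s : ∀ i, K i ⟶ L i) : sumC K ⟶ sumC L :=
  ((colim : (Discrete I ⥤ G) ⥤ G).mapHomologicalComplex _).map (famM s)

lemma sumM_quasiIso [AB4 G]
    {K L : I → CochainComplex G ℤ} (s : ∀ i, K i ⟶ L i) [∀ i, QuasiIso (s i)] :
    QuasiIso (sumM s) := by
  have := famM_quasiIso s
  have h1 : PreservesFiniteLimits (colim : (Discrete I ⥤ G) ⥤ G) := inferInstance
  have h3 : (colim : (Discrete I ⥤ G) ⥤ G).PreservesHomology := inferInstance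
  exact HomologicalComplex.quasiIso_map_of_preservesHomology _ _

noncomputable def sumι (K : I → CochainComplex G ℤ) (i : I) : K i ⟶ sumC K where
  f n := Sigma.ι (fun i => (K i).X n) i
  comm' a b _ := by
    exact ι_colimMap ((famC K).d a b) ⟨i⟩

lemma sumι_M {K L : I → CochainComplex G ℤ} (s : ∀ i, K i ⟶ L i) (i : I) :
    sumι K i ≫ sumM s = s i ≫ sumι L i := by
  ext n
  exact ι_colimMap ((famM s).f n) ⟨i⟩

lemma sum_ext {K : I → CochainComplex G ℤ} {L : CochainComplex G ℤ} (f g : sumC K ⟶ L)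
    (h : ∀ i, sumι K i ≫ f = sumι K i ≫ g) : f = g := by
  ext n
  refine Sigma.hom_ext (f := fun i => (K i).X n) _ _ fun i => ?_
  exact congrArg (fun t => t.f n) (h i)

noncomputable def sumDesc {K : I → CochainComplex G ℤ} {L : CochainComplex G ℤ}
    (f : ∀ i, K i ⟶ L) : sumC K ⟶ L where
  f n := Sigma.desc (f := fun i => (K i).X n) fun i => (f i).f n
  comm' a b _ := by
    refine Sigma.hom_ext (f := fun i => (K i).X a) _ _ fun i => ?_
    have h1 := (sumι K i).comm a b
    change Sigma.ι (fun i => (K i).X a) i ≫ _ = _ ≫ Sigma.ι (fun i => (K i).X b) i at h1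
    have h2 := Sigma.ι_desc (f := fun i => (K i).X a) (fun i => (f i).f a) i
    have h3 := Sigma.ι_desc (f := fun i => (K i).X b) (fun i => (f i).f b) i
    refine (Category.assoc _ _ _).symm.trans ?_
    refine (congrArg (· ≫ L.d a b) h2).trans ?_
    refine Eq.trans ?_ (Category.assoc _ _ _)
    refine Eq.trans ?_ (congrArg (· ≫ _) h1.symm)
    refine Eq.trans ?_ (Category.assoc _ _ _).symm
    refine Eq.trans ?_ (congrArg ((K i).d a b ≫ ·) h3.symm)
    exact (f i).comm a b

lemma sumι_desc {K : I → CochainComplex G ℤ} {L : CochainComplex G ℤ}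
    (f : ∀ i, K i ⟶ L) (i : I) : sumι K i ≫ sumDesc f = f i := by
  ext n
  exact Sigma.ι_desc (f := fun i => (K i).X n) _ _

noncomputable def sumCof (K : I → CochainComplex G ℤ) : Cofan K := Cofan.mk (sumC K) (sumι K)

noncomputable def sumCofIs (K : I → CochainComplex G ℤ) : IsColimit (sumCof K) :=
  Cofan.IsColimit.mk _ (fun s => sumDesc s.inj) (fun s i => sumι_desc _ i)
    (fun s m h => sum_ext _ _ fun i => by rw [sumι_desc]; exact h i)

variable [HasDerivedCategory.{w} G]
open DerivedCategory

lemma fac_zero {K L : CochainComplex G ℤ} (a : K ⟶ L) (h : Q.map a = 0) :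
    ∃ (N : CochainComplex G ℤ) (u : K ⟶ N) (v : N ⟶ L), IsZero (Q.obj N) ∧ u ≫ v = a := by
  have h' : Qh.map ((HomotopyCategory.quotient G (.up ℤ)).map a) =
     Qh.map ((HomotopyCategory.quotient G (.up ℤ)).map 0) := by
    refine h.trans ?_
    rw [Functor.map_zero, Functor.map_zero]; rfl
  rw [MorphismProperty.map_eq_iff_precomp Qh (HomotopyCategory.quasiIso G (.up ℤ))] at h'
  obtain ⟨X', s, hs, hh⟩ := h'
  obtain ⟨X', rfl⟩ := HomotopyCategory.quotient_obj_surjective X'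
  obtain ⟨s, rfl⟩ := (HomotopyCategory.quotient _ _).map_surjective s
  rw [← Functor.map_comp, ← Functor.map_comp, comp_zero] at hh
  have H := HomotopyCategory.homotopyOfEq _ _ hh
  rw [← isIso_Qh_map_iff] at hs
  have hs' : IsIso (Q.map s) := hs
  obtain ⟨z, hz⟩ := CochainComplex.HomComplex.Cochain.equivHomotopy _ _ H
  refine ⟨CochainComplex.mappingCone s, CochainComplex.mappingCone.inr s,
    CochainComplex.mappingCone.desc s z a ?_, ?_, ?_⟩
  · simp [hz]
  · exact (Pretriangulated.Triangle.isZero₃_iff_isIso₁ _ (mappingCone_triangle_distinguished s)).2 hs'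
  · simp

lemma isZero_sum [AB4 G] (N : I → CochainComplex G ℤ) (h : ∀ i, IsZero (Q.obj (N i))) :
    IsZero (Q.obj (sumC N)) := by
  let s : ∀ i, N i ⟶ (0 : CochainComplex G ℤ) := fun i => 0
  have hs : ∀ i, QuasiIso (s i) := fun i => by
    rw [← isIso_Q_map_iff_quasiIso]
    exact (h i).isIso (Q.map_isZero (isZero_zero _)) _
  have := sumM_quasiIso s
  refine IsZero.of_iso (Q.map_isZero ?_) (asIso (Q.map (sumM s)))
  rw [IsZero.iff_id_eq_zero]
  exact sum_ext _ _ fun i => (isZero_zero _).eq_of_src _ _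

lemma Q_sum_ext [AB4 G] (K : I → CochainComplex G ℤ) {Z : DerivedCategory G}
    (f : Q.obj (sumC K) ⟶ Z) (h : ∀ i, Q.map (sumι K i) ≫ f = 0) : f = 0 := by
  obtain ⟨L, ⟨e⟩⟩ : ∃ L, Nonempty (Q.obj L ≅ Z) := ⟨_, ⟨Q.objObjPreimageIso Z⟩⟩
  rw [← cancel_mono e.inv, zero_comp]
  obtain ⟨L', g, s, hs, fac⟩ := left_fac (f ≫ e.inv)
  have h' : ∀ i, Q.map (sumι K i ≫ g) = 0 := fun i => by
    rw [← cancel_mono (inv (Q.map s)), Q.map_comp, Category.assoc, ← fac, reassoc_of% (h i)]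
    simp
  choose N a b hN hab using fun i => fac_zero _ (h' i)
  have hg : g = sumM a ≫ sumDesc b := sum_ext _ _ fun i => by
    rw [← Category.assoc, sumι_M, Category.assoc, sumι_desc, hab]
  have : Q.map g = 0 := by
    rw [hg, Q.map_comp, (isZero_sum N hN).eq_of_tgt (Q.map (sumM a)) 0, zero_comp]
  rw [fac, this, zero_comp]

lemma Q_sum_desc [AB4 G] (K : I → CochainComplex G ℤ) {Z : DerivedCategory G}
    (f : ∀ i, Q.obj (K i) ⟶ Z) :
    ∃ g : Q.obj (sumC K) ⟶ Z, ∀ i, Q.map (sumι K i) ≫ g = f i := by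
  obtain ⟨L, ⟨e⟩⟩ : ∃ L, Nonempty (Q.obj L ≅ Z) := ⟨_, ⟨Q.objObjPreimageIso Z⟩⟩
  choose K' s hs g fac using fun i => right_fac (f i ≫ e.inv)
  have hs' : ∀ i, QuasiIso (s i) := fun i => (isIso_Q_map_iff_quasiIso _ _).1 (hs i)
  have := sumM_quasiIso s
  refine ⟨inv (Q.map (sumM s)) ≫ Q.map (sumDesc g) ≫ e.hom, fun i => ?_⟩
  have h1 : Q.map (sumι K i) ≫ inv (Q.map (sumM s)) = inv (Q.map (s i)) ≫ Q.map (sumι K' i) := by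
    rw [IsIso.comp_inv_eq, Category.assoc, ← Q.map_comp, sumι_M, Q.map_comp, IsIso.inv_hom_id_assoc]
  rw [reassoc_of% h1, ← Q.map_comp_assoc, sumι_desc, ← Category.assoc, ← fac]
  simp

noncomputable def QsumIs [AB4 G] (K : I → CochainComplex G ℤ) :
    IsColimit (Cofan.mk (f := fun i => Q.obj (K i)) (Q.obj (sumC K))
      (fun i => Q.map (sumι K i))) :=
  Cofan.IsColimit.mk _ (fun s => (Q_sum_desc K s.inj).choose)
    (fun s i => (Q_sum_desc K s.inj).choose_spec i)
    (fun s m h => by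
      rw [← sub_eq_zero]
      refine Q_sum_ext K _ fun i => ?_
      rw [Preadditive.comp_sub, (Q_sum_desc K s.inj).choose_spec i, sub_eq_zero]
      exact h i)

variable [HasCoproducts.{v} (DerivedCategory G)]

/-- coproducts in the derived category are computed termwise -/
noncomputable def sumIso [AB4 G] (K : I → CochainComplex G ℤ) :
    (∐ fun i => Q.obj (K i)) ≅ Q.obj (sumC K) :=
  (coproductIsCoproduct (fun i => Q.obj (K i))).coconePointUniqueUpToIso (QsumIs K)

lemma isGE_coprod [AB4 G] (Y : I → DerivedCategory G) (n : ℤ) (h : ∀ i, (Y i).IsGE n) :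
    (∐ Y).IsGE n := by
  choose K hK e using fun i => exists_iso_Q_obj_of_isGE (Y i) n
  have : (sumC K).IsStrictlyGE n := by
    rw [CochainComplex.isStrictlyGE_iff]
    intro j hj
    rw [IsZero.iff_id_eq_zero]
    refine Sigma.hom_ext (f := fun i => (K i).X j) _ _ fun i => ?_
    exact ((K i).isZero_of_isStrictlyGE n j hj).eq_of_src _ _
  exact TStructure.t.isGE_of_iso (Sigma.mapIso (fun i => (e i).some) ≪≫ sumIso K).symm n

lemma isLE_coprod [AB4 G] (Y : I → DerivedCategory G) (n : ℤ) (h : ∀ i, (Y i).IsLE n) :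
    (∐ Y).IsLE n := by
  choose K hK e using fun i => exists_iso_Q_obj_of_isLE (Y i) n
  have : (sumC K).IsStrictlyLE n := by
    rw [CochainComplex.isStrictlyLE_iff]
    intro j hj
    rw [IsZero.iff_id_eq_zero]
    refine Sigma.hom_ext (f := fun i => (K i).X j) _ _ fun i => ?_
    exact ((K i).isZero_of_isStrictlyLE n j hj).eq_of_src _ _
  exact TStructure.t.isLE_of_iso (Sigma.mapIso (fun i => (e i).some) ≪≫ sumIso K).symm n

lemma single_coprod [AB4 G] (A : I → G) (p : ℤ) :
    Nonempty ((∐ fun i => ((singleFunctor G 0).obj (A i))⟦p⟧) ≅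
      ((singleFunctor G 0).obj (∐ A))⟦p⟧) := by
  let S := HomologicalComplex.single G (.up ℤ) 0
  let e1 : sumC (fun i => S.obj (A i)) ≅ S.obj (∐ A) :=
    (sumCofIs (fun i => S.obj (A i))).coconePointUniqueUpToIso
      (coproductIsCoproduct _) ≪≫ (PreservesCoproduct.iso S A).symm
  have e2 : (∐ fun i => (singleFunctor G 0).obj (A i)) ≅ (singleFunctor G 0).obj (∐ A) :=
    sumIso (fun i => S.obj (A i)) ≪≫ Q.mapIso e1
  exact ⟨(PreservesCoproduct.iso (shiftFunctor (DerivedCategory G) p) _).symm ≪≫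
    (shiftFunctor (DerivedCategory G) p).mapIso e2⟩

end copr
end S18

namespace S18
section fin
open DerivedCategory

section hz
variable {D : Type u} [Category.{v} D] [Preadditive D] [HasShift D ℤ]

def HZ (A B : D) : Prop := ∀ f : A ⟶ B, f = 0

lemma HZ.iso {A B A' B' : D} (h : HZ A B) (e : A ≅ A') (e' : B ≅ B') : HZ A' B' := fun f => by
  have := h (e.hom ≫ f ≫ e'.inv)
  rw [← cancel_epi e.hom, ← cancel_mono e'.inv, Category.assoc, this]
  simp

variable [∀ n : ℤ, (shiftFunctor D n).Additive]

lemma HZ.shift {A B : D} (h : HZ A B) (n : ℤ) : HZ (A⟦n⟧) (B⟦n⟧) := fun f => by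
  obtain ⟨f, rfl⟩ := (shiftFunctor D n).map_surjective f
  rw [h f, Functor.map_zero]

lemma HZ.unshift {A B : D} (n : ℤ) (h : HZ (A⟦n⟧) (B⟦n⟧)) : HZ A B := fun f => by
  apply (shiftFunctor D n).map_injective
  rw [h ((shiftFunctor D n).map f), Functor.map_zero]

/-- reindexing of double shifts -/
noncomputable def shIso (B : D) (p k q n : ℤ) (h : p + k = q + n) : B⟦p⟧⟦k⟧ ≅ B⟦q⟧⟦n⟧ :=
  ((shiftFunctorAdd' D p k (p + k) rfl).app B).symm ≪≫
    (shiftFunctorAdd' D q n (p + k) h.symm).app B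

end hz

section proj
variable {D : Type u} [Category.{w} D] [Preadditive D] [HasCoproducts.{v} D] {I : Type v}
variable (Y : I → D)

open scoped Classical in
noncomputable def eP (P : I → Prop) : ∐ Y ⟶ ∐ Y :=
  Sigma.desc fun i => if P i then Sigma.ι Y i else 0

open scoped Classical in
lemma eP_fac (P : I → Prop) : ∃ (a : ∐ Y ⟶ ∐ fun i : {i // P i} => Y i.1)
    (b : (∐ fun i : {i // P i} => Y i.1) ⟶ ∐ Y), a ≫ b = eP Y P := by
  refine ⟨Sigma.desc fun i => if h : P i then Sigma.ι (fun i : {i // P i} => Y i.1) ⟨i, h⟩ else 0,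
    Sigma.desc fun i => Sigma.ι Y i.1, ?_⟩
  refine Sigma.hom_ext _ _ fun i => ?_
  unfold eP
  by_cases h : P i <;> simp [h]

lemma eP_sum (g : I → ℤ) (a b : ℤ) : 𝟙 (∐ Y) = eP Y (fun i => g i < a) + eP Y (fun i => b < g i ∧ a ≤ g i)
    + ∑ p ∈ Finset.Icc a b, eP Y (fun i => g i = p) := by
  classical
  refine Sigma.hom_ext _ _ fun i => ?_
  simp only [Preadditive.comp_add, Preadditive.comp_sum, eP, Sigma.ι_desc, Category.comp_id]
  have hs : (∑ x ∈ Finset.Icc a b, @ite _ (g i = x) (Classical.propDecidable _) (Sigma.ι Y i) 0) =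
      if a ≤ g i ∧ g i ≤ b then Sigma.ι Y i else 0 := by
    by_cases h : a ≤ g i ∧ g i ≤ b
    · rw [if_pos h, Finset.sum_eq_single (g i)]
      · simp
      · intro x _ hx
        simp [hx.symm]
      · intro h'
        exact absurd (Finset.mem_Icc.2 h) h'
    · rw [if_neg h]
      refine Finset.sum_eq_zero fun x hx => ?_
      rw [Finset.mem_Icc] at hx
      rw [if_neg]
      rintro rfl
      exact h hx
  rw [hs]
  by_cases h1 : g i < a
  · simp [h1, not_le.2 h1]
  · by_cases h2 : b < g i
    · simp [h1, h2, not_le.2 h2, not_lt.1 h1]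
    · simp [h1, h2, not_lt.1 h2, not_lt.1 h1]

lemma HZ_of_pieces [HasShift D ℤ] [∀ n : ℤ, (shiftFunctor D n).Additive] (A : D) (k : ℤ)
    (g : I → ℤ) (a b : ℤ)
    (h1 : HZ A ((∐ fun i : {i // g i < a} => Y i.1)⟦k⟧))
    (h2 : HZ A ((∐ fun i : {i // b < g i ∧ a ≤ g i} => Y i.1)⟦k⟧))
    (h3 : ∀ p, a ≤ p → p ≤ b → HZ A ((∐ fun i : {i // g i = p} => Y i.1)⟦k⟧)) :
    HZ A ((∐ Y)⟦k⟧) := fun f => by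
  have key : ∀ P : I → Prop, HZ A ((∐ fun i : {i // P i} => Y i.1)⟦k⟧) →
      f ≫ (eP Y P)⟦k⟧' = 0 := by
    intro P hP
    obtain ⟨a, b, hab⟩ := eP_fac Y P
    rw [← hab, Functor.map_comp, ← Category.assoc, hP (f ≫ a⟦k⟧'), zero_comp]
  have e : f = f ≫ (𝟙 (∐ Y))⟦k⟧' := by simp
  rw [e, eP_sum Y g a b, Functor.map_add, Functor.map_add, Functor.map_sum,
    Preadditive.comp_add, Preadditive.comp_add, Preadditive.comp_sum, key _ h1, key _ h2,
    Finset.sum_eq_zero]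
  · simp
  · intro p hp
    rw [Finset.mem_Icc] at hp
    exact key _ (h3 p hp.1 hp.2)
end proj

variable {G : Type u} [Category.{v} G] [Abelian G] [HasColimits G] [AB4 G]
  [HasDerivedCategory.{w} G] (T : ℤ → G) [HasCoproducts.{v} (DerivedCategory G)]

lemma isGE_sh (A : G) (n : ℤ) : (((singleFunctor G 0).obj A)⟦n⟧).IsGE (-n) :=
  TStructure.t.isGE_shift _ 0 n (-n)
lemma isLE_sh (A : G) (n : ℤ) : (((singleFunctor G 0).obj A)⟦n⟧).IsLE (-n) :=
  TStructure.t.isLE_shift _ 0 n (-n)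

lemma forward (d : ℕ)
    (hgldim : ∀ (k : ℤ), (d : ℤ) < k → ∀ M N : G,
      ∀ f : (DerivedCategory.singleFunctor G 0).obj M ⟶
        ((DerivedCategory.singleFunctor G 0).obj N)⟦k⟧, f = 0)
    (H : ∀ (p n : ℤ) (I : Type v) (k : ℕ), p - n < (k : ℤ) →
      HZ ((DerivedCategory.singleFunctor G 0).obj (T n))
        (((DerivedCategory.singleFunctor G 0).obj (∐ (fun _ : I => T p)))⟦(k : ℤ)⟧))
    (n k : ℤ) (hk : 0 < k) (I : Type v) (g : I → ℤ) :
    HZ (((singleFunctor G 0).obj (T n))⟦n⟧)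
      ((∐ (fun i => ((singleFunctor G 0).obj (T (g i)))⟦g i⟧))⟦k⟧) := by
  refine HZ_of_pieces _ _ k g (n - k) (n - k + d) ?_ ?_ ?_
  · intro f
    have h1 := isLE_sh (T n) n
    have h2 : (∐ fun i : {i // g i < n - k} =>
        ((singleFunctor G 0).obj (T (g i.1)))⟦g i.1⟧).IsGE (k - n + 1) := by
      refine isGE_coprod _ _ fun i => ?_
      have := isGE_sh (T (g i.1)) (g i.1)
      have := i.2
      exact TStructure.t.isGE_of_ge _ _ (-(g i.1))
    have h3 := TStructure.t.isGE_shift (n := k - n + 1) (a := k) (n' := -n + 1) (hn' := by lia) (X := ∐ fun i : {i // g i < n - k} =>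
        ((singleFunctor G 0).obj (T (g i.1)))⟦g i.1⟧)
    exact TStructure.t.zero f (-n) (-n + 1)
  · have h2 : (∐ fun i : {i // n - k + d < g i ∧ n - k ≤ g i} =>
        ((singleFunctor G 0).obj (T (g i.1)))⟦g i.1⟧).IsLE (k - n - d - 1) := by
      refine isLE_coprod _ _ fun i => ?_
      have := isLE_sh (T (g i.1)) (g i.1)
      have := i.2.1
      exact TStructure.t.isLE_of_le _ (-(g i.1)) _
    have h3 := TStructure.t.isLE_shift (n := k - n - d - 1) (a := k - n) (n' := -(d : ℤ) - 1) (hn' := by lia)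
      (X := ∐ fun i : {i // n - k + d < g i ∧ n - k ≤ g i} =>
        ((singleFunctor G 0).obj (T (g i.1)))⟦g i.1⟧)
    have h4 : HZ ((singleFunctor G 0).obj (T n)) _ := fun f => hom_zero_of_isLE d hgldim (T n) _ f (hZ := h3)
    exact (h4.shift n).iso (Iso.refl _)
      ((shiftFunctorAdd' _ (k - n) n k (by lia)).app _).symm
  · intro p h1 h2
    obtain ⟨K, hK⟩ := Int.eq_ofNat_of_zero_le (show 0 ≤ p + k - n by lia)
    obtain ⟨e⟩ := single_coprod (fun _ : {i // g i = p} => T p) p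
    have e' : (∐ fun i : {i // g i = p} => ((singleFunctor G 0).obj (T (g i.1)))⟦g i.1⟧) ≅
        (∐ fun i : {i // g i = p} => ((singleFunctor G 0).obj (T p))⟦p⟧) :=
      Sigma.mapIso fun i => eqToIso (by rw [i.2])
    exact ((H p n {i // g i = p} K (by lia)).shift n).iso (Iso.refl _)
      (shIso _ (K : ℤ) n p k (by lia) ≪≫ (shiftFunctor _ k).mapIso (e' ≪≫ e).symm)

lemma backward (p n : ℤ) (I : Type v) (k : ℕ)
    (H : HZ (∐ fun _ : PUnit.{v+1} => ((singleFunctor G 0).obj (T n))⟦n⟧)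
      ((∐ (fun _ : I => ((singleFunctor G 0).obj (T p))⟦p⟧))⟦(k : ℤ) + n - p⟧)) :
      HZ ((DerivedCategory.singleFunctor G 0).obj (T n))
        (((DerivedCategory.singleFunctor G 0).obj (∐ (fun _ : I => T p)))⟦(k : ℤ)⟧) := by
  obtain ⟨e⟩ := single_coprod (fun _ : I => T p) p
  refine HZ.unshift n (H.iso ?_ ?_)
  · exact ⟨Sigma.desc fun _ => 𝟙 _, Sigma.ι (fun _ : PUnit.{v+1} => ((singleFunctor G 0).obj (T n))⟦n⟧) ⟨⟩,
      by refine Sigma.hom_ext _ _ fun i => ?_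
         simp, by simp⟩
  · exact (shiftFunctor _ _).mapIso e ≪≫ shIso _ p _ k n (by lia)

end fin
end S18

/-- Let `G` be a Grothendieck category of global dimension `≤ d < ∞` and `(T_n)_{n∈ℤ}` a
sequence of objects of `G`.  Then `(T_n)` is a superexceptional sequence, i.e.
`Ext^k_G(T_n, T_p^{(I)}) = 0` for all `p, n ∈ ℤ`, all sets `I` and all natural numbers
`k > p - n`, if and only if the set `𝒯 = {T_n[n] : n ∈ ℤ}` is strongly nonpositive in
`D(G)`, i.e. `Hom_{D(G)}(X, Y⟦k⟧) = 0` for all `k > 0` whenever `X, Y ∈ Sum(𝒯)`. -/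
theorem stmt18 [AB5 G] (G₀ : G) (hsep : IsSeparator G₀)
    [HasCoproducts.{v} (DerivedCategory G)] (d : ℕ)
    (hgldim : ∀ (k : ℤ), (d : ℤ) < k → ∀ M N : G,
      ∀ f : (DerivedCategory.singleFunctor G 0).obj M ⟶
        ((DerivedCategory.singleFunctor G 0).obj N)⟦k⟧, f = 0) :
    (∀ (p n : ℤ) (I : Type v) (k : ℕ), p - n < (k : ℤ) →
      ∀ f : (DerivedCategory.singleFunctor G 0).obj (T n) ⟶
        ((DerivedCategory.singleFunctor G 0).obj (∐ (fun _ : I => T p)))⟦(k : ℤ)⟧, f = 0) ↔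
    (∀ X Y : DerivedCategory G, X ∈ sumShiftSet T → Y ∈ sumShiftSet T →
      ∀ k : ℤ, 0 < k → ∀ f : X ⟶ Y⟦k⟧, f = 0) := by
  have := Abelian.hasFiniteBiproducts (C := G)
  have hAB4 : AB4 G := AB4.of_AB5 G
  constructor
  · rintro H X Y ⟨I, g, ⟨e⟩⟩ ⟨J, g', ⟨e'⟩⟩ k hk
    refine S18.HZ.iso ?_ e.symm ((shiftFunctor _ k).mapIso e'.symm)
    intro f
    refine Sigma.hom_ext _ _ fun i => ?_
    rw [comp_zero]
    exact S18.forward T d hgldim H (g i) k hk J g' _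
  · intro H p n I k hk
    exact S18.backward T p n I k (H _ _ ⟨PUnit, fun _ => n, ⟨Iso.refl _⟩⟩
      ⟨I, fun _ => p, ⟨Iso.refl _⟩⟩ _ (by lia))
end
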